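/- Let Q be a privacy protocol all of whose entries are positive and whose rank is a, and let μ be a Borel probability measure on the simplex 𝒫 having a continuous density f, with p ↦ log det D_p μ-integrable. Then lim_{n→∞} ( h_n(P|Y⃗) + ((a−1)/2)·log n ) = γ_μ(Q). -/

import Mathlib

/-!
In the coordinates `q` of the simplex, `q ↦ Q p(q) = c₀ + B q` is an injective affine map, so the
observations form an i.i.d. sample from an identifiable affine family of distributions whose
probabilities are bounded away from zero. Its Fisher information `J(q) = Bᵀ diag(Q p(q))⁻¹ B` has
the determinant of `D_p`, because `D_p p = (1, …, 1)`. The theorem therefore says that the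
conditional entropy is asymptotically the mean entropy of Gaussians with covariance `(n J(q))⁻¹`
in dimension `m = a - 1`.

Upper bound. By Gibbs' inequality the entropy of a posterior is at most its cross-entropy with any
Gaussian density. The Gaussian is centred at the weighted least squares estimate, with `n` times
the Fisher matrix at the (truncated) empirical frequencies as precision. The expected
cross-entropy involves a continuous function of the frequencies and a quadratic form in the centred
counts, whose limits follow from second and fourth moments of the multinomial distribution.

Lower bound. The conditional entropy is the expectation of `log (marginal / likelihood)` plus the
entropy of the prior `f`. By Gibbs' inequality on the samples, the marginal may be replaced by that
of the prior `f + ε`, at a cost vanishing with `ε`. For `q` in the interior, restrict this marginal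
to a ball of radius of order `n^(-1/2)` around `q` and expand the log-likelihood to second order;
completing the square, shifting the Gaussian to the maximiser, and `exp x ≥ 1 + x` for the error
term give the right limit. Since `f + ε ≥ ε`, there is also a crude lower bound which is uniform in
`n` and `q`, and this allows one to integrate the limit over `q` as in Fatou's lemma.
-/

open MeasureTheory Matrix Finset Filter Real

noncomputable section

/-- The probability simplex in `ℝ^a`. -/
def simplex (a : ℕ) : Set (Fin a → ℝ) :=
  {p | (∀ x, 0 ≤ p x) ∧ ∑ x, p x = 1}

/-- Likelihood `L_y(p) = ∏ i, (Qp)_{y i}`. -/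
def lik {a b n : ℕ} (Q : Matrix (Fin b) (Fin a) ℝ) (y : Fin n → Fin b)
    (p : Fin a → ℝ) : ℝ :=
  ∏ i, Q.mulVec p (y i)

/-- Mean squared error for distribution estimation. -/
def MSEdistr {a b n : ℕ} (Q : Matrix (Fin b) (Fin a) ℝ) (μ : Measure (Fin a → ℝ))
    (Est : (Fin n → Fin b) → (Fin a → ℝ)) : ℝ :=
  ∑ y : (Fin n → Fin b), ∫ p, (∑ x, (p x - Est y x) ^ 2) * lik Q y p ∂μ

/-- The posterior-mean estimator for distribution estimation. -/
def PiOpt {a b n : ℕ} (Q : Matrix (Fin b) (Fin a) ℝ) (μ : Measure (Fin a → ℝ))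
    (y : Fin n → Fin b) : Fin a → ℝ :=
  fun x => (∫ p, p x * lik Q y p ∂μ) / (∫ p, lik Q y p ∂μ)

/-- Empirical frequency vector of a data vector. -/
def freqVec {a n : ℕ} (xv : Fin n → Fin a) : Fin a → ℝ :=
  fun α => ((Finset.univ.filter fun i => xv i = α).card : ℝ) / n

/-- Joint weight `w(x⃗,y⃗) = ∫ ∏ i, p_{x_i} Q_{y_i|x_i} dμ(p)`. -/
def wgt {a b n : ℕ} (Q : Matrix (Fin b) (Fin a) ℝ) (μ : Measure (Fin a → ℝ))
    (xv : Fin n → Fin a) (y : Fin n → Fin b) : ℝ :=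
  ∫ p, (∏ i, p (xv i) * Q (y i) (xv i)) ∂μ

/-- Mean squared error for frequency estimation. -/
def MSEfreq {a b n : ℕ} (Q : Matrix (Fin b) (Fin a) ℝ) (μ : Measure (Fin a → ℝ))
    (Est : (Fin n → Fin b) → (Fin a → ℝ)) : ℝ :=
  ∑ xv : (Fin n → Fin a), ∑ y : (Fin n → Fin b),
    wgt Q μ xv y * ∑ α, (freqVec xv α - Est y α) ^ 2

/-- The posterior-mean estimator for frequency estimation. -/
def PhiOpt {a b n : ℕ} (Q : Matrix (Fin b) (Fin a) ℝ) (μ : Measure (Fin a → ℝ))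
    (y : Fin n → Fin b) : Fin a → ℝ :=
  fun α => (∑ xv : (Fin n → Fin a), wgt Q μ xv y * freqVec xv α) /
    (∑ xv : (Fin n → Fin a), wgt Q μ xv y)

/-- `P(φ, y⃗) = ∑_{x⃗ : F(x⃗) = φ} w(x⃗, y⃗)`. -/
def Pphi {a b n : ℕ} (Q : Matrix (Fin b) (Fin a) ℝ) (μ : Measure (Fin a → ℝ))
    (φ : Fin a → ℝ) (y : Fin n → Fin b) : ℝ := by
  classical
  exact ∑ xv ∈ Finset.univ.filter (fun xv : Fin n → Fin a => freqVec xv = φ), wgt Q μ xv y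

/-- Conditional Shannon entropy `H_n(F | Y⃗)` (terms with zero probability vanish since
`Real.log 0 = 0`). -/
def HFcond {a b : ℕ} (Q : Matrix (Fin b) (Fin a) ℝ) (μ : Measure (Fin a → ℝ))
    (n : ℕ) : ℝ := by
  classical
  exact -(∑ y : (Fin n → Fin b), ∑ φ ∈ Finset.image (freqVec (a := a) (n := n)) Finset.univ,
      Pphi Q μ φ y * Real.log (Pphi Q μ φ y /
        ∑ φ' ∈ Finset.image (freqVec (a := a) (n := n)) Finset.univ, Pphi Q μ φ' y))

/-- The set `Δ = {q ∈ ℝ^m : q ≥ 0, ∑ q ≤ 1}`. -/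
def stdCorner (m : ℕ) : Set (Fin m → ℝ) :=
  {q | (∀ i, 0 ≤ q i) ∧ ∑ i, q i ≤ 1}

/-- The identification `Δ ⊂ ℝ^{a-1} → 𝒫 ⊂ ℝ^a`,
`q ↦ (q_1, …, q_{a-1}, 1 - ∑ q_i)`. -/
def emb (a : ℕ) (q : Fin (a - 1) → ℝ) : Fin a → ℝ :=
  fun x => if h : (x : ℕ) < a - 1 then q ⟨x.1, h⟩ else 1 - ∑ i, q i

/-- `μ` has density `f` (w.r.t. Lebesgue measure on `Δ`). -/
def IsDensity {a : ℕ} (μ : Measure (Fin a → ℝ)) (f : (Fin (a - 1) → ℝ) → ℝ) : Prop :=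
  Measurable f ∧ (∀ q, 0 ≤ f q) ∧ (∫ q in stdCorner (a - 1), f q) = 1 ∧
  ∀ g : (Fin a → ℝ) → ℝ, Measurable g → (∃ C, ∀ p, |g p| ≤ C) →
    (∫ p, g p ∂μ) = ∫ q in stdCorner (a - 1), g (emb a q) * f q

/-- `μ` has continuous density `f`. -/
def IsContDensity {a : ℕ} (μ : Measure (Fin a → ℝ)) (f : (Fin (a - 1) → ℝ) → ℝ) : Prop :=
  ContinuousOn f (stdCorner (a - 1)) ∧ (∀ q, 0 ≤ f q) ∧
  (∫ q in stdCorner (a - 1), f q) = 1 ∧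
  ∀ g : (Fin a → ℝ) → ℝ, Measurable g → (∃ C, ∀ p, |g p| ≤ C) →
    (∫ p, g p ∂μ) = ∫ q in stdCorner (a - 1), g (emb a q) * f q

/-- Normalisation constant `C_{y⃗} = ∫_Δ f(q) L_{y⃗}(p(q)) dλ(q)`. -/
def Cw {a b n : ℕ} (Q : Matrix (Fin b) (Fin a) ℝ) (f : (Fin (a - 1) → ℝ) → ℝ)
    (y : Fin n → Fin b) : ℝ :=
  ∫ q in stdCorner (a - 1), f q * lik Q y (emb a q)

/-- Posterior density `g_{y⃗}(q) = f(q) L_{y⃗}(p(q)) / C_{y⃗}`. -/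
def gpost {a b n : ℕ} (Q : Matrix (Fin b) (Fin a) ℝ) (f : (Fin (a - 1) → ℝ) → ℝ)
    (y : Fin n → Fin b) (q : Fin (a - 1) → ℝ) : ℝ :=
  f q * lik Q y (emb a q) / Cw Q f y

/-- Conditional differential entropy `h_n(P | Y⃗)`. -/
def hCond {a b : ℕ} (Q : Matrix (Fin b) (Fin a) ℝ) (f : (Fin (a - 1) → ℝ) → ℝ)
    (n : ℕ) : ℝ :=
  ∑ y : (Fin n → Fin b),
    Cw Q f y * (-(∫ q in stdCorner (a - 1), gpost Q f y q * Real.log (gpost Q f y q)))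

/-- The matrix `D_p = Qᵀ · diag(Qp)⁻¹ · Q`. -/
def Dmat {a b : ℕ} (Q : Matrix (Fin b) (Fin a) ℝ) (p : Fin a → ℝ) :
    Matrix (Fin a) (Fin a) ℝ :=
  Qᵀ * Matrix.diagonal (fun y => (Q.mulVec p y)⁻¹) * Q

/-- The constant `γ_μ(Q)`. -/
def gammaMu {a b : ℕ} (Q : Matrix (Fin b) (Fin a) ℝ) (μ : Measure (Fin a → ℝ)) : ℝ :=
  (((a : ℝ) - 1) / 2) * Real.log (2 * π * Real.exp 1) -
    (1 / 2) * ∫ p, Real.log (Dmat Q p).det ∂μ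

/-- The truncated column `w_x = (Q_{1|x}, …, Q_{b-1|x})`. -/
def wcol {a b : ℕ} (Q : Matrix (Fin b) (Fin a) ℝ) (x : Fin a) : Fin (b - 1) → ℝ :=
  fun y => Q ⟨y.1, lt_of_lt_of_le y.2 (Nat.sub_le b 1)⟩ x

/-- The matrix `E_x = diag(w_x) - w_x w_xᵀ`. -/
def Emat {a b : ℕ} (Q : Matrix (Fin b) (Fin a) ℝ) (x : Fin a) :
    Matrix (Fin (b - 1)) (Fin (b - 1)) ℝ :=
  Matrix.diagonal (wcol Q x) - Matrix.vecMulVec (wcol Q x) (wcol Q x)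

/-- The matrix `G_p = ∑ x, p_x E_x`. -/
def Gmat {a b : ℕ} (Q : Matrix (Fin b) (Fin a) ℝ) (p : Fin a → ℝ) :
    Matrix (Fin (b - 1)) (Fin (b - 1)) ℝ :=
  ∑ x, p x • Emat Q x

/-- The constant `δ_μ(Q)`. -/
def deltaMu {a b : ℕ} (Q : Matrix (Fin b) (Fin a) ℝ) (μ : Measure (Fin a → ℝ)) : ℝ :=
  gammaMu Q μ +
    (1 / 2) * ∫ p, (Real.log (Gmat Q p).det - ∑ y, Real.log (Q.mulVec p y)) ∂μ

/-- `Q` satisfies `ε`-local differential privacy. -/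
def SatisfiesLDP {a b : ℕ} (Q : Matrix (Fin b) (Fin a) ℝ) (ε : ℝ) : Prop :=
  ∀ x x' : Fin a, ∀ y : Fin b, Q y x' ≤ Real.exp ε * Q y x

/-! ### Moments of multinomial counts -/

/-- Expectation of `g (Y₁, …, Yₙ)` for an i.i.d. sample with weights `w` on the outcomes `ι`. -/
def sampleExp {ι : Type*} [Fintype ι] (w : ι → ℝ) {n : ℕ} (g : (Fin n → ι) → ℝ) : ℝ :=
  ∑ y : Fin n → ι, (∏ i, w (y i)) * g y

/-- The sum `X (y₁) + … + X (yₙ)` of a statistic `X` over the sample `y`. -/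
def sampleSum {ι : Type*} {n : ℕ} (X : ι → ℝ) (y : Fin n → ι) : ℝ := ∑ i, X (y i)

/-- The number of occurrences of the outcome `j` in the sample `y`, as a real number. -/
def cnt {ι : Type*} [DecidableEq ι] {n : ℕ} (y : Fin n → ι) (j : ι) : ℝ :=
  sampleSum (Pi.single j 1) y

/-- The centred count `N_j - n w_j` of the outcome `j` under the weights `w`. -/
def dev {ι : Type*} [DecidableEq ι] {n : ℕ} (w : ι → ℝ) (y : Fin n → ι) (j : ι) : ℝ :=
  cnt y j - n * w j

section Expectation

variable {ι : Type*} {n : ℕ} {w : ι → ℝ}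

lemma sampleSum_cons (X : ι → ℝ) (j : ι) (y : Fin n → ι) :
    sampleSum X (Fin.cons j y : Fin (n + 1) → ι) = X j + sampleSum X y := by
  simp [sampleSum, Fin.sum_univ_succ]

variable [Fintype ι]

lemma sampleExp_add (g h : (Fin n → ι) → ℝ) :
    sampleExp w (fun y => g y + h y) = sampleExp w g + sampleExp w h := by
  simp [sampleExp, mul_add, Finset.sum_add_distrib]

lemma sampleExp_sub (g h : (Fin n → ι) → ℝ) :
    sampleExp w (fun y => g y - h y) = sampleExp w g - sampleExp w h := by
  simp [sampleExp, mul_sub, Finset.sum_sub_distrib]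

lemma sampleExp_const_mul (r : ℝ) (g : (Fin n → ι) → ℝ) :
    sampleExp w (fun y => r * g y) = r * sampleExp w g := by
  simp only [sampleExp, Finset.mul_sum]
  exact Finset.sum_congr rfl fun y _ => by ring

lemma sampleExp_sum {κ : Type*} (s : Finset κ) (g : κ → (Fin n → ι) → ℝ) :
    sampleExp w (fun y => ∑ k ∈ s, g k y) = ∑ k ∈ s, sampleExp w (g k) := by
  simp only [sampleExp, Finset.mul_sum]
  exact Finset.sum_comm

lemma sampleExp_mono (hw : ∀ j, 0 ≤ w j) {g h : (Fin n → ι) → ℝ} (hgh : ∀ y, g y ≤ h y) :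
    sampleExp w g ≤ sampleExp w h :=
  Finset.sum_le_sum fun y _ =>
    mul_le_mul_of_nonneg_left (hgh y) (Finset.prod_nonneg fun _ _ => hw _)

lemma abs_sampleExp_le (hw : ∀ j, 0 ≤ w j) (g : (Fin n → ι) → ℝ) :
    |sampleExp w g| ≤ sampleExp w fun y => |g y| := by
  refine (Finset.abs_sum_le_sum_abs _ _).trans_eq (Finset.sum_congr rfl fun y _ => ?_)
  rw [abs_mul, abs_of_nonneg (Finset.prod_nonneg fun _ _ => hw _)]

lemma sampleExp_succ (g : (Fin (n + 1) → ι) → ℝ) :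
    sampleExp w g = ∑ j, w j * sampleExp w (fun y : Fin n → ι => g (Fin.cons j y)) := by
  unfold sampleExp
  rw [← (Fin.consEquiv (fun _ : Fin (n + 1) => ι)).sum_comp, Fintype.sum_prod_type]
  simp only [Finset.mul_sum]
  refine Finset.sum_congr rfl fun j _ => Finset.sum_congr rfl fun y _ => ?_
  simp [Fin.consEquiv, Fin.prod_univ_succ, mul_assoc]

lemma sampleExp_const (hw : ∑ j, w j = 1) (r : ℝ) :
    sampleExp w (fun _ : Fin n → ι => r) = r := by
  induction n with
  | zero => simp [sampleExp]
  | succ n ih => simp [sampleExp_succ, ih, ← Finset.sum_mul, hw]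

lemma sampleExp_sampleSum (hw : ∑ j, w j = 1) (X : ι → ℝ) :
    sampleExp w (fun y : Fin n → ι => sampleSum X y) = n * ∑ j, w j * X j := by
  induction n with
  | zero => simp [sampleExp, sampleSum]
  | succ n ih =>
    simp only [sampleExp_succ, sampleSum_cons, sampleExp_add, sampleExp_const hw, ih, mul_add,
      Finset.sum_add_distrib, ← Finset.sum_mul, hw]
    push_cast; ring

lemma sampleExp_sampleSum_of_centred (hw : ∑ j, w j = 1) {X : ι → ℝ}
    (hX : ∑ j, w j * X j = 0) : sampleExp w (fun y : Fin n → ι => sampleSum X y) = 0 := by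
  rw [sampleExp_sampleSum hw, hX, mul_zero]

lemma sampleExp_add_sampleSum_mul (hw : ∑ j, w j = 1) {X Z : ι → ℝ}
    (hX : ∑ j, w j * X j = 0) (hZ : ∑ j, w j * Z j = 0) (r s : ℝ) :
    sampleExp w (fun y : Fin n → ι => (r + sampleSum X y) * (s + sampleSum Z y))
      = r * s + sampleExp w (fun y : Fin n → ι => sampleSum X y * sampleSum Z y) := by
  have expand (y : Fin n → ι) : (r + sampleSum X y) * (s + sampleSum Z y)
      = r * s + r * sampleSum Z y + s * sampleSum X y + sampleSum X y * sampleSum Z y := by ring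
  simp only [expand, sampleExp_add, sampleExp_const hw, sampleExp_const_mul,
    sampleExp_sampleSum_of_centred hw hX, sampleExp_sampleSum_of_centred hw hZ]
  ring

lemma sampleExp_sampleSum_mul (hw : ∑ j, w j = 1) {X Z : ι → ℝ}
    (hX : ∑ j, w j * X j = 0) (hZ : ∑ j, w j * Z j = 0) :
    sampleExp w (fun y : Fin n → ι => sampleSum X y * sampleSum Z y)
      = n * ∑ j, w j * (X j * Z j) := by
  induction n with
  | zero => simp [sampleExp, sampleSum]
  | succ n ih =>
    simp only [sampleExp_succ, sampleSum_cons, sampleExp_add_sampleSum_mul hw hX hZ, ih]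
    simp only [mul_add, Finset.sum_add_distrib, ← Finset.sum_mul, hw]
    push_cast; ring

lemma sampleExp_add_sampleSum_pow_four (hw : ∑ j, w j = 1) {X : ι → ℝ}
    (hX : ∑ j, w j * X j = 0) (r : ℝ) :
    sampleExp w (fun y : Fin n → ι => (r + sampleSum X y) ^ 4)
      = r ^ 4 + 6 * r ^ 2 * (n * ∑ j, w j * (X j * X j))
        + 4 * r * sampleExp w (fun y : Fin n → ι => sampleSum X y ^ 3)
        + sampleExp w (fun y : Fin n → ι => sampleSum X y ^ 4) := by
  have expand (y : Fin n → ι) : (r + sampleSum X y) ^ 4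
      = r ^ 4 + (4 * r ^ 3) * sampleSum X y + (6 * r ^ 2) * (sampleSum X y * sampleSum X y)
        + (4 * r) * sampleSum X y ^ 3 + sampleSum X y ^ 4 := by ring
  simp only [expand, sampleExp_add, sampleExp_const hw, sampleExp_const_mul,
    sampleExp_sampleSum_of_centred hw hX, sampleExp_sampleSum_mul hw hX hX]
  ring

lemma sum_mul_le_one (hw : w ∈ stdSimplex ℝ ι) {X : ι → ℝ} (hX : ∀ j, X j ≤ 1) :
    ∑ j, w j * X j ≤ 1 :=
  (Finset.sum_le_sum fun j _ => mul_le_of_le_one_right (hw.1 j) (hX j)).trans_eq hw.2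

lemma sampleExp_sampleSum_pow_four_le (hw : w ∈ stdSimplex ℝ ι) {X : ι → ℝ}
    (hX : ∑ j, w j * X j = 0) (hX1 : ∀ j, |X j| ≤ 1) :
    sampleExp w (fun y : Fin n → ι => sampleSum X y ^ 4) ≤ 3 * (n : ℝ) ^ 2 := by
  induction n with
  | zero => simp [sampleExp, sampleSum]
  | succ n ih =>
    have hsq (j : ι) : X j ^ 2 ≤ 1 := (sq_le_one_iff_abs_le_one _).2 (hX1 j)
    have hfour (j : ι) : X j ^ 4 ≤ 1 := by nlinarith [hsq j, sq_nonneg (X j)]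
    have hv := sum_mul_le_one hw (X := fun j => X j * X j) fun j => by nlinarith [hsq j]
    set v := ∑ j, w j * (X j * X j)
    have hv_nonneg : 0 ≤ v :=
      Finset.sum_nonneg fun j _ => mul_nonneg (hw.1 j) (mul_self_nonneg _)
    set c₃ := sampleExp w fun y : Fin n → ι => sampleSum X y ^ 3
    calc sampleExp w (fun y : Fin (n + 1) → ι => sampleSum X y ^ 4)
        ≤ ∑ j, w j * (1 + 6 * X j ^ 2 * (n * v) + 4 * X j * c₃ + 3 * (n : ℝ) ^ 2) := by
          simp only [sampleExp_succ, sampleSum_cons, sampleExp_add_sampleSum_pow_four hw.2 hX]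
          gcongr with j
          exacts [hw.1 j, hfour j]
      _ = ∑ j, (w j * (1 + 3 * (n : ℝ) ^ 2) + 6 * n * v * (w j * (X j * X j))
            + 4 * c₃ * (w j * X j)) := Finset.sum_congr rfl fun j _ => by ring
      _ = 1 + 3 * (n : ℝ) ^ 2 + 6 * n * v * v := by
          rw [Finset.sum_add_distrib, Finset.sum_add_distrib, ← Finset.sum_mul, ← Finset.mul_sum,
            ← Finset.mul_sum, hw.2, hX]
          ring
      _ ≤ 3 * ((n + 1 : ℕ) : ℝ) ^ 2 := by
          have : (n : ℝ) * (v * v) ≤ n * 1 := by gcongr; nlinarith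
          push_cast
          linarith

lemma le_one_of_mem_stdSimplex (hw : w ∈ stdSimplex ℝ ι) (j : ι) : w j ≤ 1 :=
  hw.2 ▸ Finset.single_le_sum (fun k _ => hw.1 k) (Finset.mem_univ j)

end Expectation

section Counts

variable {ι : Type*} [DecidableEq ι] {n : ℕ} {w : ι → ℝ}

lemma cnt_nonneg (y : Fin n → ι) (j : ι) : 0 ≤ cnt y j := by
  have : (0 : ι → ℝ) ≤ Pi.single j 1 := Pi.single_nonneg.2 zero_le_one
  rw [cnt, sampleSum]
  exact Finset.sum_nonneg fun i _ => this (y i)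

lemma cnt_le (y : Fin n → ι) (j : ι) : cnt y j ≤ n := by
  have (k : ι) : (Pi.single j 1 : ι → ℝ) k ≤ 1 := by
    rw [Pi.single_apply]
    split_ifs <;> norm_num
  rw [cnt, sampleSum]
  exact (Finset.sum_le_sum fun i _ => this (y i)).trans_eq (by simp)

lemma dev_eq_sampleSum (y : Fin n → ι) (j : ι) :
    dev w y j = sampleSum (fun k => (Pi.single j 1 : ι → ℝ) k - w j) y := by
  simp [dev, cnt, sampleSum, Finset.sum_sub_distrib]

variable [Fintype ι]

lemma sampleSum_eq_sum_cnt_mul (X : ι → ℝ) (y : Fin n → ι) :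
    sampleSum X y = ∑ j, cnt y j * X j := by
  simp only [cnt, sampleSum, Finset.sum_mul, Pi.single_apply]
  rw [Finset.sum_comm]
  simp

lemma sum_cnt (y : Fin n → ι) : ∑ j, cnt y j = n := by
  simpa [sampleSum] using (sampleSum_eq_sum_cnt_mul (fun _ => (1 : ℝ)) y).symm

lemma sum_mul_single_sub (hw : ∑ j, w j = 1) (j : ι) :
    ∑ k, w k * ((Pi.single j 1 : ι → ℝ) k - w j) = 0 := by
  simp [mul_sub, Pi.single_apply, Finset.sum_sub_distrib, ← Finset.sum_mul, hw]

lemma sampleExp_dev_mul_dev (hw : ∑ j, w j = 1) (j k : ι) :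
    sampleExp w (fun y : Fin n → ι => dev w y j * dev w y k)
      = n * ((if j = k then w j else 0) - w j * w k) := by
  simp only [dev_eq_sampleSum]
  rw [sampleExp_sampleSum_mul hw (sum_mul_single_sub hw j) (sum_mul_single_sub hw k)]
  have expand (l : ι) : w l *
      (((Pi.single j 1 : ι → ℝ) l - w j) * ((Pi.single k 1 : ι → ℝ) l - w k))
      = (if l = j then w l * ((if l = k then 1 else 0) - w k) else 0)
        - w j * (w l * ((Pi.single k 1 : ι → ℝ) l - w k)) := by
    simp only [Pi.single_apply]
    split_ifs <;> ring
  simp only [expand, Finset.sum_sub_distrib, ← Finset.mul_sum, sum_mul_single_sub hw,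
    Finset.sum_ite_eq', Finset.mem_univ, if_true, mul_zero, sub_zero]
  split_ifs <;> ring

lemma sampleExp_dev_sq_le (hw : w ∈ stdSimplex ℝ ι) (j : ι) :
    sampleExp w (fun y : Fin n → ι => dev w y j ^ 2) ≤ n := by
  simp only [pow_two, sampleExp_dev_mul_dev hw.2, if_true]
  have := le_one_of_mem_stdSimplex hw j
  exact mul_le_of_le_one_right n.cast_nonneg (by nlinarith [hw.1 j])

lemma sampleExp_dev_pow_four_le (hw : w ∈ stdSimplex ℝ ι) (j : ι) :
    sampleExp w (fun y : Fin n → ι => dev w y j ^ 4) ≤ 3 * (n : ℝ) ^ 2 := by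
  simp only [dev_eq_sampleSum]
  refine sampleExp_sampleSum_pow_four_le hw (sum_mul_single_sub hw.2 j) fun k => ?_
  have h₁ := le_one_of_mem_stdSimplex hw j
  have h₀ := hw.1 j
  rw [abs_le, Pi.single_apply]
  split_ifs <;> constructor <;> linarith

/-- AM-GM turns the second moment into a first moment. -/
lemma sampleExp_abs_dev_le (hw : w ∈ stdSimplex ℝ ι) (hn : 0 < n) (j : ι) :
    sampleExp w (fun y : Fin n → ι => |dev w y j|) ≤ √n := by
  have : 0 < √(n : ℝ) := Real.sqrt_pos.2 (by exact_mod_cast hn)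
  have am_gm (y : Fin n → ι) : |dev w y j| ≤ √n / 2 + 1 / (2 * √n) * dev w y j ^ 2 := by
    have : √n / 2 + 1 / (2 * √n) * dev w y j ^ 2 - |dev w y j|
        = (√n - |dev w y j|) ^ 2 / (2 * √n) := by
      rw [← sq_abs]; field_simp; ring
    linarith [show 0 ≤ (√n - |dev w y j|) ^ 2 / (2 * √n) by positivity]
  calc sampleExp w (fun y : Fin n → ι => |dev w y j|)
      ≤ √n / 2 + 1 / (2 * √n) * sampleExp w (fun y : Fin n → ι => dev w y j ^ 2) := by
        refine (sampleExp_mono hw.1 am_gm).trans_eq ?_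
        rw [sampleExp_add, sampleExp_const hw.2, sampleExp_const_mul]
    _ ≤ √n / 2 + 1 / (2 * √n) * n := by gcongr; exact sampleExp_dev_sq_le hw j
    _ = √n := by
        field_simp
        rw [Real.sq_sqrt n.cast_nonneg]
        ring

lemma sampleExp_sum_abs_dev_le (hw : w ∈ stdSimplex ℝ ι) (hn : 0 < n) :
    sampleExp w (fun y : Fin n → ι => ∑ j, |dev w y j|) ≤ Fintype.card ι * √n := by
  rw [sampleExp_sum]
  refine (Finset.sum_le_sum fun j _ => sampleExp_abs_dev_le hw hn j).trans_eq ?_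
  simp

end Counts

/-! ### Gaussian integrals -/

section Gaussian

lemma setIntegral_eq_zero_of_odd {E : Type*} [MeasurableSpace E] [AddGroup E] [MeasurableNeg E]
    (μ : Measure E) [μ.IsNegInvariant] {D : Set E} (hD : -D = D) {g : E → ℝ}
    (hg : ∀ x, g (-x) = -g x) : ∫ x in D, g x ∂μ = 0 := by
  have h := (Measure.measurePreserving_neg μ).setIntegral_preimage_emb
    (MeasurableEquiv.neg E).measurableEmbedding g D
  simp only [hg, integral_neg] at h
  change -∫ x in -D, g x ∂μ = _ at h
  rw [hD] at h
  linarith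

/-- The linear term of `exp x ≥ 1 + x` integrates to zero. -/
lemma setIntegral_exp_le_setIntegral_exp_add_of_odd {E : Type*} [TopologicalSpace E] [AddGroup E]
    [IsTopologicalAddGroup E] [MeasurableSpace E] [BorelSpace E] (μ : Measure E)
    [IsFiniteMeasureOnCompacts μ] [μ.IsNegInvariant] {D : Set E} (hDc : IsCompact D)
    (hDm : MeasurableSet D) (hD : -D = D) {φ ℓ : E → ℝ} (hφc : Continuous φ)
    (hφ : ∀ x, φ (-x) = φ x) (hℓc : Continuous ℓ) (hℓ : ∀ x, ℓ (-x) = -ℓ x) :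
    ∫ x in D, exp (φ x) ∂μ ≤ ∫ x in D, exp (φ x + ℓ x) ∂μ := by
  have integrable {g : E → ℝ} (hg : Continuous g) : IntegrableOn g D μ :=
    hg.continuousOn.integrableOn_compact' hDc hDm
  have odd : ∫ x in D, ℓ x * exp (φ x) ∂μ = 0 :=
    setIntegral_eq_zero_of_odd μ hD fun x => by rw [hφ, hℓ, neg_mul]
  calc ∫ x in D, exp (φ x) ∂μ
      = ∫ x in D, (exp (φ x) + ℓ x * exp (φ x)) ∂μ := by
        rw [integral_add (integrable (by fun_prop)) (integrable (by fun_prop)), odd, add_zero]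
    _ ≤ ∫ x in D, exp (φ x + ℓ x) ∂μ := by
        refine setIntegral_mono (integrable (by fun_prop)) (integrable (by fun_prop)) fun x => ?_
        rw [exp_add]
        nlinarith [exp_pos (φ x), add_one_le_exp (ℓ x)]

variable {κ : Type*} [Fintype κ]

lemma continuous_dotProduct_mulVec_self (J : Matrix κ κ ℝ) :
    Continuous fun u : κ → ℝ => u ⬝ᵥ J *ᵥ u :=
  continuous_id.dotProduct (continuous_const.matrix_mulVec continuous_id)

lemma setIntegral_gaussian_le_setIntegral_tilted (J : Matrix κ κ ℝ) (s : κ → ℝ) (r : ℝ) :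
    ∫ u in Metric.closedBall (0 : κ → ℝ) r, exp (-(1 / 2) * (u ⬝ᵥ J *ᵥ u))
      ≤ ∫ u in Metric.closedBall (0 : κ → ℝ) r, exp (-(1 / 2) * (u ⬝ᵥ J *ᵥ u) + s ⬝ᵥ u) :=
  setIntegral_exp_le_setIntegral_exp_add_of_odd volume (isCompact_closedBall _ _)
    Metric.isClosed_closedBall.measurableSet (by simp)
    ((continuous_dotProduct_mulVec_self J).const_mul _) (by simp [mulVec_neg])
    (continuous_const.dotProduct continuous_id) (by simp)

lemma exp_neg_half_sum_sq (w : κ → ℝ) :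
    exp (-(1 / 2) * ∑ i, w i ^ 2) = ∏ i, exp (-(1 / 2) * w i ^ 2) := by
  rw [Finset.mul_sum, exp_sum]

lemma integrable_exp_neg_half_sum_sq :
    Integrable fun w : κ → ℝ => exp (-(1 / 2) * ∑ i, w i ^ 2) := by
  simp only [exp_neg_half_sum_sq]
  exact Integrable.fintype_prod (f := fun _ x => exp (-(1 / 2) * x ^ 2))
    fun _ => integrable_exp_neg_mul_sq (by norm_num)

lemma integral_exp_neg_half_sum_sq :
    ∫ w : κ → ℝ, exp (-(1 / 2) * ∑ i, w i ^ 2) = √(2 * π) ^ Fintype.card κ := by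
  simp only [exp_neg_half_sum_sq]
  rw [integral_fintype_prod_volume_eq_pow (fun x : ℝ => exp (-(1 / 2) * x ^ 2)),
    integral_gaussian]
  simp [div_eq_mul_inv, mul_comm]

variable {J : Matrix κ κ ℝ}

open scoped MatrixOrder Matrix.Norms.L2Operator in
lemma exists_transpose_mul_self_of_posDef [DecidableEq κ] (hJ : J.PosDef) :
    ∃ M : Matrix κ κ ℝ, M.det ≠ 0 ∧ J = Mᵀ * M := by
  obtain ⟨M, hM⟩ := CStarAlgebra.nonneg_iff_eq_star_mul_self.mp hJ.posSemidef.nonneg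
  rw [star_eq_conjTranspose, conjTranspose_eq_transpose_of_trivial] at hM
  refine ⟨M, fun hdet => hJ.det_pos.ne' ?_, hM⟩
  rw [hM, det_mul, hdet, mul_zero]

lemma dotProduct_transpose_mul_self_mulVec [DecidableEq κ] (M : Matrix κ κ ℝ) (w : κ → ℝ) :
    w ⬝ᵥ (Mᵀ * M) *ᵥ w = ∑ i, (toLin' M w) i ^ 2 := by
  rw [← mulVec_mulVec, dotProduct_mulVec, vecMul_transpose]
  simp [dotProduct, pow_two]

lemma measurable_toLin' [DecidableEq κ] (M : Matrix κ κ ℝ) : Measurable (toLin' M) :=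
  (LinearMap.continuous_of_finiteDimensional (toLin' M)).measurable

lemma integrable_gaussian_of_posDef (hJ : J.PosDef) :
    Integrable fun u : κ → ℝ => exp (-(1 / 2) * (u ⬝ᵥ J *ᵥ u)) := by
  classical
  obtain ⟨M, hM, rfl⟩ := exists_transpose_mul_self_of_posDef hJ
  simp only [dotProduct_transpose_mul_self_mulVec]
  refine Integrable.comp_measurable (μ := volume) (f := toLin' M)
    (g := fun w : κ → ℝ => exp (-(1 / 2) * ∑ i, w i ^ 2)) ?_ (measurable_toLin' M)
  rw [map_matrix_volume_pi_eq_smul_volume_pi hM]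
  exact integrable_exp_neg_half_sum_sq.smul_measure ENNReal.ofReal_ne_top

lemma tendsto_setIntegral_closedBall_gaussian (hJ : J.PosDef) :
    Tendsto (fun r : ℝ => ∫ u in Metric.closedBall (0 : κ → ℝ) r,
        exp (-(1 / 2) * (u ⬝ᵥ J *ᵥ u))) atTop
      (nhds (∫ u : κ → ℝ, exp (-(1 / 2) * (u ⬝ᵥ J *ᵥ u)))) :=
  (aecover_closedBall (x := (0 : κ → ℝ)) tendsto_id).integral_tendsto_of_countably_generated
    (integrable_gaussian_of_posDef hJ)

variable [DecidableEq κ]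

lemma integral_gaussian_of_posDef (hJ : J.PosDef) :
    ∫ u : κ → ℝ, exp (-(1 / 2) * (u ⬝ᵥ J *ᵥ u)) = √(2 * π) ^ Fintype.card κ / √J.det := by
  obtain ⟨M, hM, rfl⟩ := exists_transpose_mul_self_of_posDef hJ
  have hcont : Continuous fun w : κ → ℝ => exp (-(1 / 2) * ∑ i, w i ^ 2) := by fun_prop
  simp only [dotProduct_transpose_mul_self_mulVec]
  rw [← integral_map (μ := volume) (measurable_toLin' M).aemeasurable
      (f := fun w : κ → ℝ => exp (-(1 / 2) * ∑ i, w i ^ 2)) hcont.aestronglyMeasurable,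
    map_matrix_volume_pi_eq_smul_volume_pi hM, integral_smul_measure,
    integral_exp_neg_half_sum_sq, det_mul, det_transpose, ← pow_two, sqrt_sq_eq_abs,
    ENNReal.toReal_ofReal (abs_nonneg _), abs_inv, smul_eq_mul]
  ring

lemma log_integral_gaussian_of_posDef (hJ : J.PosDef) :
    log (∫ u : κ → ℝ, exp (-(1 / 2) * (u ⬝ᵥ J *ᵥ u)))
      = Fintype.card κ / 2 * log (2 * π) - 1 / 2 * log J.det := by
  have : 0 < √(2 * π) := sqrt_pos.2 (by positivity)
  have hdet : 0 < √J.det := sqrt_pos.2 hJ.det_pos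
  rw [integral_gaussian_of_posDef hJ, log_div (by positivity) hdet.ne', log_pow,
    log_sqrt (by positivity), log_sqrt hJ.det_pos.le]
  ring

end Gaussian

/-! ### Fisher matrices and weighted least squares -/

/-- The Fisher information `Bᵀ diag(v)⁻¹ B` of the affine family of weights with slope `B`, at the
member `v`. -/
def fisher {ι κ : Type*} [Fintype ι] [DecidableEq ι] (B : Matrix ι κ ℝ) (v : ι → ℝ) :
    Matrix κ κ ℝ :=
  Bᵀ * diagonal (fun j => (v j)⁻¹) * B

/-- The weighted least squares operator `(Bᵀ diag(v)⁻¹ B)⁻¹ Bᵀ diag(v)⁻¹`, a left inverse of `B`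
which estimates the parameter from observed frequencies. -/
def wls {ι κ : Type*} [Fintype ι] [DecidableEq ι] [Fintype κ] [DecidableEq κ] (B : Matrix ι κ ℝ)
    (v : ι → ℝ) : Matrix κ ι ℝ :=
  (fisher B v)⁻¹ * Bᵀ * diagonal (fun j => (v j)⁻¹)

/-- The Gram matrix of the weighted least squares operator in the Fisher metric. -/
def wlsGram {ι κ : Type*} [Fintype ι] [DecidableEq ι] [Fintype κ] [DecidableEq κ]
    (B : Matrix ι κ ℝ) (v : ι → ℝ) : Matrix ι ι ℝ :=
  (wls B v)ᵀ * fisher B v * wls B v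

section Fisher

lemma transpose_mulVec_one {ι κ : Type*} [Fintype ι] {B : Matrix ι κ ℝ}
    (hB : ∀ k, ∑ j, B j k = 0) : Bᵀ *ᵥ (1 : ι → ℝ) = 0 := by
  ext k
  simp [mulVec, dotProduct, hB k]

variable {ι κ : Type*} [Fintype ι] [DecidableEq ι] {B : Matrix ι κ ℝ} {v : ι → ℝ}

lemma fisher_transpose (B : Matrix ι κ ℝ) (v : ι → ℝ) : (fisher B v)ᵀ = fisher B v := by
  simp [fisher, transpose_mul, Matrix.mul_assoc]

lemma diagonal_inv_mulVec_self (hv : ∀ j, v j ≠ 0) : diagonal (fun j => (v j)⁻¹) *ᵥ v = 1 := by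
  ext j
  simp [mulVec_diagonal, inv_mul_cancel₀ (hv j)]

variable [Fintype κ]

lemma dotProduct_fisher_mulVec (u : κ → ℝ) :
    u ⬝ᵥ fisher B v *ᵥ u = ∑ j, (v j)⁻¹ * (B *ᵥ u) j ^ 2 := by
  rw [fisher, ← mulVec_mulVec, ← mulVec_mulVec, dotProduct_mulVec, vecMul_transpose]
  refine Finset.sum_congr rfl fun j _ => ?_
  rw [mulVec_diagonal]
  ring

lemma fisher_posDef (hB : Function.Injective B.mulVec) (hv : ∀ j, 0 < v j) :
    (fisher B v).PosDef := by
  have hdiag : (diagonal fun j => (v j)⁻¹).PosDef := PosDef.diagonal fun j => inv_pos.2 (hv j)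
  simpa [fisher, conjTranspose_eq_transpose_of_trivial] using hdiag.conjTranspose_mul_mul_same hB

variable [DecidableEq κ]

lemma fisher_isUnit (hB : Function.Injective B.mulVec) (hv : ∀ j, 0 < v j) :
    IsUnit (fisher B v).det :=
  (fisher_posDef hB hv).det_pos.ne'.isUnit

lemma wls_mul (hB : Function.Injective B.mulVec) (hv : ∀ j, 0 < v j) : wls B v * B = 1 := by
  rw [wls, Matrix.mul_assoc, Matrix.mul_assoc, ← Matrix.mul_assoc Bᵀ]
  exact nonsing_inv_mul _ (fisher_isUnit hB hv)

lemma fisher_mul_wls (hB : Function.Injective B.mulVec) (hv : ∀ j, 0 < v j) :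
    fisher B v * wls B v = Bᵀ * diagonal (fun j => (v j)⁻¹) := by
  rw [wls, Matrix.mul_assoc, ← Matrix.mul_assoc, mul_nonsing_inv _ (fisher_isUnit hB hv),
    Matrix.one_mul]

lemma dotProduct_wlsGram_mulVec (d : ι → ℝ) :
    d ⬝ᵥ wlsGram B v *ᵥ d = (wls B v *ᵥ d) ⬝ᵥ fisher B v *ᵥ (wls B v *ᵥ d) := by
  rw [wlsGram, ← mulVec_mulVec, ← mulVec_mulVec, dotProduct_mulVec, vecMul_transpose]

lemma trace_wlsGram_mul_diagonal (hB : Function.Injective B.mulVec) (hv : ∀ j, 0 < v j) :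
    (wlsGram B v * diagonal v).trace = Fintype.card κ := by
  have hdiag : diagonal (fun j => (v j)⁻¹) * diagonal v = (1 : Matrix ι ι ℝ) := by
    simp [diagonal_mul_diagonal, inv_mul_cancel₀ (hv _).ne']
  rw [wlsGram, Matrix.mul_assoc, Matrix.mul_assoc, ← Matrix.mul_assoc (fisher B v),
    fisher_mul_wls hB hv, Matrix.mul_assoc, hdiag, Matrix.mul_one, ← transpose_mul,
    trace_transpose, trace_mul_comm, wls_mul hB hv, trace_one]

lemma wls_mulVec_self (hB : ∀ k, ∑ j, B j k = 0) (hv : ∀ j, 0 < v j) : wls B v *ᵥ v = 0 := by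
  rw [wls, ← mulVec_mulVec, ← mulVec_mulVec, diagonal_inv_mulVec_self fun j => (hv j).ne',
    transpose_mulVec_one hB, mulVec_zero]

lemma sampleExp_dotProduct_mulVec_dev {n : ℕ} (hv : ∑ j, v j = 1) (A : Matrix ι ι ℝ) :
    sampleExp v (fun y : Fin n → ι => dev v y ⬝ᵥ A *ᵥ dev v y)
      = n * ((A * diagonal v).trace - v ⬝ᵥ A *ᵥ v) := by
  have expand (y : Fin n → ι) :
      dev v y ⬝ᵥ A *ᵥ dev v y = ∑ j, ∑ k, A j k * (dev v y j * dev v y k) := by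
    simp only [dotProduct, mulVec, Finset.mul_sum]
    exact Finset.sum_congr rfl fun j _ => Finset.sum_congr rfl fun k _ => by ring
  simp only [expand, sampleExp_sum, sampleExp_const_mul, sampleExp_dev_mul_dev hv]
  simp only [trace, diag_apply, mul_diagonal, dotProduct, mulVec, Finset.mul_sum, mul_sub,
    Finset.sum_sub_distrib]
  congr 1
  · refine Finset.sum_congr rfl fun j _ => ?_
    simp only [mul_ite, mul_zero, Finset.sum_ite_eq, Finset.mem_univ, if_true]
    ring
  · exact Finset.sum_congr rfl fun j _ => Finset.sum_congr rfl fun k _ => by ring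

end Fisher

/-! ### Laws of large numbers for quadratic statistics -/

/-- The empirical frequencies of a sample. -/
def freq {ι : Type*} [DecidableEq ι] {n : ℕ} (y : Fin n → ι) : ι → ℝ := fun j => cnt y j / n

/-- A quadratic statistic: `ℓ + (2n)⁻¹ dᵀ A d`, where `d` is the vector of centred counts and the
coefficients `ℓ` and `A` are functions of the empirical frequencies. -/
def quadStat {ι : Type*} [Fintype ι] [DecidableEq ι] (ℓ : (ι → ℝ) → ℝ)
    (A : (ι → ℝ) → Matrix ι ι ℝ) (w : ι → ℝ) {n : ℕ} (y : Fin n → ι) : ℝ :=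
  ℓ (freq y) + 1 / (2 * n) * (dev w y ⬝ᵥ A (freq y) *ᵥ dev w y)

section QuadraticStatistic

variable {ι : Type*} {w : ι → ℝ} {n : ℕ}

lemma freq_sub [DecidableEq ι] (hn : n ≠ 0) (w : ι → ℝ) (y : Fin n → ι)
    (j : ι) : freq y j - w j = dev w y j / n := by
  rw [freq, dev]
  field_simp

lemma freq_mem_Icc [DecidableEq ι] (y : Fin n → ι) : freq y ∈ Set.Icc (0 : ι → ℝ) 1 :=
  ⟨fun j => div_nonneg (cnt_nonneg y j) n.cast_nonneg,
    fun j => div_le_one_of_le₀ (cnt_le y j) n.cast_nonneg⟩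

variable [Fintype ι]

/-- Near `p` by continuity, away from `p` because `Ψ` is bounded on the cube. -/
lemma exists_abs_le_add_mul_sum_sq {Ψ : (ι → ℝ) → ℝ} (hΨ : Continuous Ψ) {p : ι → ℝ}
    (hp : Ψ p = 0) {ε : ℝ} (hε : 0 < ε) :
    ∃ C, 0 ≤ C ∧ ∀ φ ∈ Set.Icc (0 : ι → ℝ) 1, |Ψ φ| ≤ ε + C * ∑ j, (φ j - p j) ^ 2 := by
  obtain ⟨δ, hδ, near⟩ := Metric.continuous_iff.1 hΨ p ε hε
  obtain ⟨M, hM⟩ := (isCompact_Icc (a := (0 : ι → ℝ)) (b := 1)).exists_bound_of_continuousOn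
    hΨ.continuousOn
  refine ⟨max M 0 / δ ^ 2, by positivity, fun φ hφ => ?_⟩
  by_cases hd : dist φ p < δ
  · have := near φ hd
    rw [hp, Real.dist_eq, sub_zero] at this
    exact this.le.trans (le_add_of_nonneg_right (by positivity))
  · obtain ⟨j, hj⟩ : ∃ j, δ ≤ |φ j - p j| := by
      simpa [dist_pi_lt_iff hδ, Real.dist_eq] using hd
    have far : δ ^ 2 ≤ ∑ j, (φ j - p j) ^ 2 :=
      calc δ ^ 2 ≤ (φ j - p j) ^ 2 := by rw [← sq_abs (φ j - p j)]; gcongr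
        _ ≤ _ := Finset.single_le_sum (f := fun j => (φ j - p j) ^ 2)
            (fun k _ => sq_nonneg _) (Finset.mem_univ j)
    calc |Ψ φ| ≤ max M 0 := (hM φ hφ).trans (le_max_left _ _)
      _ = max M 0 / δ ^ 2 * δ ^ 2 := by field_simp
      _ ≤ max M 0 / δ ^ 2 * ∑ j, (φ j - p j) ^ 2 := by gcongr
      _ ≤ _ := le_add_of_nonneg_left hε.le

lemma abs_mul_le_sum_sq (d : ι → ℝ) (j k : ι) : |d j * d k| ≤ ∑ l, d l ^ 2 := by
  have sq_le (i : ι) : d i ^ 2 ≤ ∑ l, d l ^ 2 := Finset.single_le_sum (f := fun l => d l ^ 2)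
    (fun l _ => sq_nonneg _) (Finset.mem_univ i)
  rw [abs_le]
  constructor <;> nlinarith [sq_le j, sq_le k, sq_nonneg (d j - d k), sq_nonneg (d j + d k)]

lemma abs_dotProduct_mulVec_self_le (A : Matrix ι ι ℝ) (d : ι → ℝ) :
    |d ⬝ᵥ A *ᵥ d| ≤ (∑ j, ∑ k, |A j k|) * ∑ l, d l ^ 2 := by
  have expand : d ⬝ᵥ A *ᵥ d = ∑ j, ∑ k, A j k * (d j * d k) := by
    simp only [dotProduct, mulVec, Finset.mul_sum, mul_left_comm]
  simp only [expand, Finset.sum_mul]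
  refine (Finset.abs_sum_le_sum_abs _ _).trans (Finset.sum_le_sum fun j _ => ?_)
  refine (Finset.abs_sum_le_sum_abs _ _).trans (Finset.sum_le_sum fun k _ => ?_)
  rw [abs_mul]
  gcongr
  exact abs_mul_le_sum_sq d j k

lemma sq_sum_sq_le_card_mul_sum_pow_four (d : ι → ℝ) :
    (∑ j, d j ^ 2) ^ 2 ≤ Fintype.card ι * ∑ j, d j ^ 4 := by
  have h := sq_sum_le_card_mul_sum_sq (s := Finset.univ) (f := fun j => d j ^ 2)
  simpa only [← pow_mul, Finset.card_univ] using h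

variable [DecidableEq ι]

lemma sampleExp_sum_dev_sq_le (hw : w ∈ stdSimplex ℝ ι) :
    sampleExp w (fun y : Fin n → ι => ∑ j, dev w y j ^ 2) ≤ Fintype.card ι * n := by
  rw [sampleExp_sum]
  exact (Finset.sum_le_sum fun j _ => sampleExp_dev_sq_le hw j).trans_eq (by simp)

lemma sampleExp_sum_dev_pow_four_le (hw : w ∈ stdSimplex ℝ ι) :
    sampleExp w (fun y : Fin n → ι => ∑ j, dev w y j ^ 4)
      ≤ Fintype.card ι * (3 * (n : ℝ) ^ 2) := by
  rw [sampleExp_sum]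
  exact (Finset.sum_le_sum fun j _ => sampleExp_dev_pow_four_le hw j).trans_eq (by simp)

lemma sampleExp_sq_sum_dev_sq_le (hw : w ∈ stdSimplex ℝ ι) :
    sampleExp w (fun y : Fin n → ι => (∑ j, dev w y j ^ 2) ^ 2)
      ≤ Fintype.card ι * (Fintype.card ι * (3 * (n : ℝ) ^ 2)) := by
  refine (sampleExp_mono hw.1 fun y => sq_sum_sq_le_card_mul_sum_pow_four (dev w y)).trans ?_
  rw [sampleExp_const_mul]
  gcongr
  exact sampleExp_sum_dev_pow_four_le hw

lemma sampleExp_one_add_sum_dev_sq_le (hw : w ∈ stdSimplex ℝ ι) (hn : n ≠ 0) :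
    sampleExp w (fun y : Fin n → ι => 1 + 1 / n * ∑ j, dev w y j ^ 2) ≤ 1 + Fintype.card ι := by
  rw [sampleExp_add, sampleExp_const hw.2, sampleExp_const_mul]
  have := sampleExp_sum_dev_sq_le (n := n) hw
  calc 1 + 1 / n * sampleExp w (fun y : Fin n → ι => ∑ j, dev w y j ^ 2)
      ≤ 1 + 1 / n * (Fintype.card ι * n) := by gcongr
    _ = 1 + Fintype.card ι := by field_simp

/-- The weight is square integrable uniformly in `n`, thanks to the fourth moments. -/
lemma sampleExp_abs_freq_mul_le (hw : w ∈ stdSimplex ℝ ι) (hn : n ≠ 0) {Ψ : (ι → ℝ) → ℝ}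
    {ε C : ℝ} (hε : 0 ≤ ε) (hC : 0 ≤ C)
    (hΨ : ∀ φ ∈ Set.Icc (0 : ι → ℝ) 1, |Ψ φ| ≤ ε + C * ∑ j, (φ j - w j) ^ 2) :
    sampleExp w (fun y : Fin n → ι => |Ψ (freq y)| * (1 + 1 / n * ∑ j, dev w y j ^ 2))
      ≤ ε * (1 + Fintype.card ι) + C * (Fintype.card ι + 3 * Fintype.card ι ^ 2) / n := by
  have pointwise (y : Fin n → ι) : |Ψ (freq y)| * (1 + 1 / n * ∑ j, dev w y j ^ 2)
      ≤ ε * (1 + 1 / n * ∑ j, dev w y j ^ 2)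
        + (C / n ^ 2 * (∑ j, dev w y j ^ 2) + C / n ^ 3 * (∑ j, dev w y j ^ 2) ^ 2) := by
    have h := hΨ _ (freq_mem_Icc y)
    simp only [freq_sub hn, div_pow, ← Finset.sum_div] at h
    refine (mul_le_mul_of_nonneg_right h (by positivity)).trans_eq ?_
    field_simp
  refine (sampleExp_mono hw.1 pointwise).trans ?_
  rw [sampleExp_add, sampleExp_add, sampleExp_const_mul, sampleExp_const_mul, sampleExp_const_mul]
  calc _ ≤ ε * (1 + Fintype.card ι) + (C / n ^ 2 * (Fintype.card ι * n)
          + C / n ^ 3 * (Fintype.card ι * (Fintype.card ι * (3 * (n : ℝ) ^ 2)))) := by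
        gcongr
        exacts [sampleExp_one_add_sum_dev_sq_le hw hn, sampleExp_sum_dev_sq_le hw,
          sampleExp_sq_sum_dev_sq_le hw]
    _ = _ := by field_simp

lemma tendsto_sampleExp_abs_freq_mul (hw : w ∈ stdSimplex ℝ ι) {Ψ : (ι → ℝ) → ℝ}
    (hΨ : Continuous Ψ) (hΨw : Ψ w = 0) :
    Tendsto (fun n : ℕ => sampleExp w (fun y : Fin n → ι =>
      |Ψ (freq y)| * (1 + 1 / n * ∑ j, dev w y j ^ 2))) atTop (nhds 0) := by
  have nonneg (n : ℕ) : 0 ≤ sampleExp w (fun y : Fin n → ι =>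
      |Ψ (freq y)| * (1 + 1 / n * ∑ j, dev w y j ^ 2)) :=
    (sampleExp_const hw.2 0).symm.le.trans (sampleExp_mono hw.1 fun y => by positivity)
  refine Metric.tendsto_atTop'.2 fun ε hε => ?_
  set δ := ε / (2 * (1 + Fintype.card ι))
  obtain ⟨C, hC, hbound⟩ := exists_abs_le_add_mul_sum_sq hΨ hΨw (show 0 < δ by positivity)
  obtain ⟨N, hN⟩ := eventually_atTop.1 ((tendsto_const_div_atTop_nhds_zero_nat
    (C * (Fintype.card ι + 3 * Fintype.card ι ^ 2))).eventually (gt_mem_nhds (half_pos hε)))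
  refine ⟨N, fun n hn => ?_⟩
  rw [Real.dist_eq, sub_zero, abs_of_nonneg (nonneg n)]
  have hle := sampleExp_abs_freq_mul_le hw (Nat.ne_zero_of_lt hn) (by positivity) hC hbound
  have hδ : δ * (1 + Fintype.card ι) = ε / 2 := by simp only [δ]; field_simp
  linarith [hN n hn.le]

lemma abs_quadStat_le (ℓ : (ι → ℝ) → ℝ) (A : (ι → ℝ) → Matrix ι ι ℝ) (y : Fin n → ι) :
    |quadStat ℓ A w y| ≤ (|ℓ (freq y)| + ∑ j, ∑ k, |A (freq y) j k|)
      * (1 + 1 / n * ∑ j, dev w y j ^ 2) := by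
  set a := ∑ j, ∑ k, |A (freq y) j k|
  set s := ∑ j, dev w y j ^ 2
  have ha : 0 ≤ a := by positivity
  have : 0 ≤ s := by positivity
  calc |quadStat ℓ A w y|
      ≤ |ℓ (freq y)| + 1 / (2 * n) * |dev w y ⬝ᵥ A (freq y) *ᵥ dev w y| := by
        refine (abs_add_le _ _).trans_eq ?_
        rw [abs_mul, abs_of_nonneg (by positivity : (0 : ℝ) ≤ 1 / (2 * n))]
    _ ≤ |ℓ (freq y)| + 1 / (2 * n) * (a * s) := by
        gcongr
        exact abs_dotProduct_mulVec_self_le _ _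
    _ = |ℓ (freq y)| + 1 / 2 * (a * (1 / n * s)) := by ring
    _ ≤ (|ℓ (freq y)| + a) * (1 + 1 / n * s) := by
        have : 0 ≤ a * (1 / n * s) := by positivity
        have : 0 ≤ |ℓ (freq y)| * (1 / n * s) := by positivity
        linarith

/-- Replacing the empirical frequencies in the coefficients by the true weights costs a vanishing
error, after which the mean is explicit. -/
lemma tendsto_sampleExp_quadStat (hw : w ∈ stdSimplex ℝ ι) {ℓ : (ι → ℝ) → ℝ}
    {A : (ι → ℝ) → Matrix ι ι ℝ} (hℓ : Continuous ℓ) (hA : Continuous A) :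
    Tendsto (fun n : ℕ => sampleExp w fun y : Fin n → ι => quadStat ℓ A w y) atTop
      (nhds (ℓ w + 1 / 2 * ((A w * diagonal w).trace - w ⬝ᵥ A w *ᵥ w))) := by
  set Ψ : (ι → ℝ) → ℝ := fun φ => |ℓ φ - ℓ w| + ∑ j, ∑ k, |(A φ - A w) j k|
  have hΨ : Continuous Ψ := (hℓ.sub continuous_const).abs.add <|
    continuous_finsetSum _ fun j _ => continuous_finsetSum _ fun k _ =>
      ((hA.sub continuous_const).matrix_elem j k).abs
  rw [tendsto_iff_dist_tendsto_zero]
  refine squeeze_zero' (Eventually.of_forall fun n => dist_nonneg) ?_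
    (tendsto_sampleExp_abs_freq_mul hw hΨ (by simp [Ψ]))
  filter_upwards [eventually_ne_atTop 0] with n hn
  have mean_frozen : sampleExp w
      (fun y : Fin n → ι => ℓ w + 1 / (2 * n) * (dev w y ⬝ᵥ A w *ᵥ dev w y))
      = ℓ w + 1 / 2 * ((A w * diagonal w).trace - w ⬝ᵥ A w *ᵥ w) := by
    rw [sampleExp_add, sampleExp_const hw.2, sampleExp_const_mul,
      sampleExp_dotProduct_mulVec_dev hw.2]
    field_simp
  rw [← mean_frozen, Real.dist_eq, ← sampleExp_sub]
  refine (abs_sampleExp_le hw.1 _).trans (sampleExp_mono hw.1 fun y => ?_)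
  have difference : quadStat ℓ A w y - (ℓ w + 1 / (2 * n) * (dev w y ⬝ᵥ A w *ᵥ dev w y))
      = quadStat (fun φ => ℓ φ - ℓ w) (fun φ => A φ - A w) w y := by
    simp only [quadStat, sub_mulVec, dotProduct_sub]
    ring
  rw [difference, abs_of_nonneg (by positivity : 0 ≤ Ψ (freq y))]
  exact abs_quadStat_le _ _ y

lemma exists_abs_sampleExp_quadStat_le {ℓ : (ι → ℝ) → ℝ} {A : (ι → ℝ) → Matrix ι ι ℝ}
    (hℓ : Continuous ℓ) (hA : Continuous A) :
    ∃ C, ∀ w ∈ stdSimplex ℝ ι, ∀ n ≠ 0,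
      |sampleExp w fun y : Fin n → ι => quadStat ℓ A w y| ≤ C := by
  have hΨ : Continuous fun φ : ι → ℝ => |ℓ φ| + ∑ j, ∑ k, |A φ j k| := hℓ.abs.add <|
    continuous_finsetSum _ fun j _ => continuous_finsetSum _ fun k _ => (hA.matrix_elem j k).abs
  obtain ⟨M, hM⟩ := (isCompact_Icc (a := (0 : ι → ℝ)) (b := 1)).exists_bound_of_continuousOn
    hΨ.continuousOn
  have hM0 : 0 ≤ M := (norm_nonneg _).trans (hM 0 ⟨le_rfl, zero_le_one⟩)
  refine ⟨M * (1 + Fintype.card ι), fun w hw n hn => ?_⟩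
  calc |sampleExp w fun y : Fin n → ι => quadStat ℓ A w y|
      ≤ sampleExp w fun y : Fin n → ι => M * (1 + 1 / n * ∑ j, dev w y j ^ 2) := by
        refine (abs_sampleExp_le hw.1 _).trans (sampleExp_mono hw.1 fun y => ?_)
        refine (abs_quadStat_le ℓ A y).trans ?_
        gcongr
        exact (le_abs_self _).trans (hM _ (freq_mem_Icc y))
    _ ≤ M * (1 + Fintype.card ι) := by
        rw [sampleExp_const_mul]
        gcongr
        exact sampleExp_one_add_sum_dev_sq_le hw hn

end QuadraticStatistic

/-! ### The plug-in Gaussian cross-entropy -/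

/-- Truncation of a vector from below at level `c`. Applied to empirical frequencies, it keeps the
plug-in Fisher matrix invertible for every sample. -/
def clamp {ι : Type*} (c : ℝ) (w : ι → ℝ) : ι → ℝ := fun j => max (w j) c

/-- The negative log-density, at the true parameter and up to constants, of the Gaussian centred
at the weighted least squares estimate with the plug-in Fisher matrix as precision. -/
def plugin {ι κ : Type*} [Fintype ι] [DecidableEq ι] [Fintype κ] [DecidableEq κ]
    (B : Matrix ι κ ℝ) (c : ℝ) (w : ι → ℝ) {n : ℕ} (y : Fin n → ι) : ℝ :=
  quadStat (fun φ => -(1 / 2) * log (fisher B (clamp c φ)).det)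
    (fun φ => wlsGram B (clamp c φ)) w y

section Plugin

variable {ι : Type*} {c : ℝ}

lemma clamp_pos (hc : 0 < c) (w : ι → ℝ) (j : ι) : 0 < clamp c w j :=
  lt_max_of_lt_right hc

lemma clamp_eq {w : ι → ℝ} (hw : ∀ j, c ≤ w j) : clamp c w = w :=
  funext fun j => max_eq_left (hw j)

lemma continuous_inv_clamp (hc : 0 < c) :
    Continuous fun (w : ι → ℝ) (j : ι) => (clamp c w j)⁻¹ :=
  continuous_pi fun j => Continuous.inv₀ ((continuous_apply j).max continuous_const)
    fun w => (clamp_pos hc w j).ne'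

variable [Fintype ι] [DecidableEq ι] {κ : Type*} {B : Matrix ι κ ℝ}

lemma continuous_fisher_clamp (hc : 0 < c) : Continuous fun w => fisher B (clamp c w) :=
  (continuous_const.matrix_mul (continuous_inv_clamp hc).matrix_diagonal).matrix_mul
    continuous_const

variable [Fintype κ] [DecidableEq κ]

lemma continuous_log_det_fisher_clamp (hB : Function.Injective B.mulVec) (hc : 0 < c) :
    Continuous fun w => log (fisher B (clamp c w)).det :=
  (continuous_fisher_clamp hc).matrix_det.log
    fun w => (fisher_posDef hB (clamp_pos hc w)).det_pos.ne'

lemma continuous_inv_fisher_clamp (hB : Function.Injective B.mulVec) (hc : 0 < c) :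
    Continuous fun w => (fisher B (clamp c w))⁻¹ := by
  have hF := continuous_fisher_clamp (B := B) hc
  simp only [Matrix.inv_def, Ring.inverse_eq_inv']
  exact (hF.matrix_det.inv₀ fun w => (fisher_posDef hB (clamp_pos hc w)).det_pos.ne').smul
    hF.matrix_adjugate

lemma continuous_wlsGram_clamp (hB : Function.Injective B.mulVec) (hc : 0 < c) :
    Continuous fun w => wlsGram B (clamp c w) := by
  have hwls : Continuous fun w => wls B (clamp c w) :=
    ((continuous_inv_fisher_clamp hB hc).matrix_mul continuous_const).matrix_mul
      (continuous_inv_clamp hc).matrix_diagonal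
  exact (hwls.matrix_transpose.matrix_mul (continuous_fisher_clamp hc)).matrix_mul hwls

lemma tendsto_sampleExp_plugin (hB : Function.Injective B.mulVec) (hB0 : ∀ k, ∑ j, B j k = 0)
    (hc : 0 < c) {w : ι → ℝ} (hw : ∀ j, c ≤ w j) (hw1 : ∑ j, w j = 1) :
    Tendsto (fun n : ℕ => sampleExp w fun y : Fin n → ι => plugin B c w y) atTop
      (nhds (-(1 / 2) * log (fisher B w).det + Fintype.card κ / 2)) := by
  have hwpos (j : ι) : 0 < w j := hc.trans_le (hw j)
  have hlim := tendsto_sampleExp_quadStat ⟨fun j => (hwpos j).le, hw1⟩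
    ((continuous_log_det_fisher_clamp hB hc).const_mul (-(1 / 2))) (continuous_wlsGram_clamp hB hc)
  rwa [clamp_eq hw, trace_wlsGram_mul_diagonal hB hwpos, dotProduct_wlsGram_mulVec,
    wls_mulVec_self hB0 hwpos, zero_dotProduct, sub_zero,
    one_div_mul_eq_div] at hlim

lemma exists_abs_sampleExp_plugin_le (hB : Function.Injective B.mulVec) (hc : 0 < c) :
    ∃ C, ∀ w ∈ stdSimplex ℝ ι, ∀ n ≠ 0,
      |sampleExp w fun y : Fin n → ι => plugin B c w y| ≤ C :=
  exists_abs_sampleExp_quadStat_le ((continuous_log_det_fisher_clamp hB hc).const_mul _)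
    (continuous_wlsGram_clamp hB hc)

end Plugin

/-! ### Conditional differential entropy and Gibbs' inequality -/

/-- The marginal weight of the observation `y` when the parameter has density `f` on `K` and `L`
is the likelihood function. -/
def marginal {E Y : Type*} [MeasureSpace E] (K : Set E) (f : E → ℝ) (L : Y → E → ℝ) (y : Y) : ℝ :=
  ∫ q in K, f q * L y q

/-- The posterior density on `K` of the parameter given the observation `y`. -/
def posterior {E Y : Type*} [MeasureSpace E] (K : Set E) (f : E → ℝ) (L : Y → E → ℝ) (y : Y)
    (q : E) : ℝ :=
  f q * L y q / marginal K f L y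

/-- The conditional differential entropy of the parameter given the observation. -/
def condEntropy {E Y : Type*} [MeasureSpace E] [Fintype Y] (K : Set E) (f : E → ℝ)
    (L : Y → E → ℝ) : ℝ :=
  ∑ y, marginal K f L y * (-∫ q in K, posterior K f L y q * log (posterior K f L y q))

/-- `L` is a likelihood function on `K`: a continuous family, indexed by `q ∈ K`, of strictly
positive probability vectors on the finite set `Y` of observations. -/
structure IsLikelihoodOn {E Y : Type*} [TopologicalSpace E] [Fintype Y] (K : Set E)
    (L : Y → E → ℝ) : Prop where
  continuousOn (y : Y) : ContinuousOn (L y) K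
  pos (y : Y) {q : E} (hq : q ∈ K) : 0 < L y q
  sum_eq_one {q : E} (hq : q ∈ K) : ∑ y, L y q = 1

section Gibbs

lemma mul_add_sub_exp_le_mul_log {x : ℝ} (hx : 0 ≤ x) (ρ : ℝ) :
    x * ρ + x - exp ρ ≤ x * log x := by
  rcases hx.eq_or_lt with rfl | hx
  · simp [(exp_pos ρ).le]
  · have h := add_one_le_exp (ρ - log x)
    rw [exp_sub, exp_log hx, le_div_iff₀ hx] at h
    linarith

lemma sum_mul_log_sub_log_sum_le {Y : Type*} {s : Finset Y} {z z' : Y → ℝ}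
    (hz : ∀ y ∈ s, 0 ≤ z y) (hz1 : ∑ y ∈ s, z y = 1) (hz' : ∀ y ∈ s, 0 < z' y) :
    ∑ y ∈ s, z y * log (z' y) - log (∑ y ∈ s, z' y) ≤ ∑ y ∈ s, z y * log (z y) := by
  have hne : s.Nonempty := Finset.nonempty_of_sum_ne_zero (hz1 ▸ one_ne_zero)
  set S := ∑ y ∈ s, z' y
  have hS : 0 < S := Finset.sum_pos hz' hne
  have gibbs : ∑ y ∈ s, (z y * log (z' y) - z y * log S + z y - z' y / S)
      ≤ ∑ y ∈ s, z y * log (z y) := by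
    refine Finset.sum_le_sum fun y hy => ?_
    have h := mul_add_sub_exp_le_mul_log (hz y hy) (log (z' y / S))
    rwa [exp_log (div_pos (hz' y hy) hS), log_div (hz' y hy).ne' hS.ne', mul_sub] at h
  rw [Finset.sum_sub_distrib, Finset.sum_add_distrib, Finset.sum_sub_distrib, ← Finset.sum_mul,
    ← Finset.sum_div, hz1, div_self hS.ne'] at gibbs
  linarith

variable {E : Type*} [TopologicalSpace E] [T2Space E] [MeasureSpace E] [OpensMeasurableSpace E]
  [IsFiniteMeasureOnCompacts (volume : Measure E)] {K : Set E}

lemma neg_setIntegral_mul_log_le (hK : IsCompact K) {g ρ : E → ℝ}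
    (hg : ContinuousOn g K) (hg0 : ∀ q ∈ K, 0 ≤ g q) (hg1 : ∫ q in K, g q = 1)
    (hρ : ContinuousOn ρ K) (hρ1 : ∫ q in K, exp (-ρ q) ≤ 1) :
    -∫ q in K, g q * log (g q) ≤ ∫ q in K, g q * ρ q := by
  have hgρ : IntegrableOn (fun q => g q * -ρ q) K := (hg.mul hρ.neg).integrableOn_compact hK
  have hgi : IntegrableOn g K := hg.integrableOn_compact hK
  have hexp : IntegrableOn (fun q => exp (-ρ q)) K := hρ.neg.rexp.integrableOn_compact hK
  have gibbs := setIntegral_mono_on ((hgρ.add hgi).sub hexp)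
    ((continuous_mul_log.comp_continuousOn hg).integrableOn_compact hK) hK.measurableSet
    fun q hq => mul_add_sub_exp_le_mul_log (hg0 q hq) (-ρ q)
  rw [integral_sub' (hgρ.add hgi) hexp, integral_add' hgρ hgi, hg1] at gibbs
  simp only [mul_neg, integral_neg, Function.comp_apply] at gibbs
  linarith

end Gibbs

section CondEntropy

variable {E Y : Type*} [TopologicalSpace E] [T2Space E] [MeasureSpace E] [OpensMeasurableSpace E]
  [IsFiniteMeasureOnCompacts (volume : Measure E)] {K : Set E} {f : E → ℝ} {L : Y → E → ℝ}

lemma marginal_pos (hK : IsCompact K) (hf : ContinuousOn f K) (hf0 : ∀ q ∈ K, 0 ≤ f q)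
    (hf1 : 0 < ∫ q in K, f q) {y : Y} (hL : ContinuousOn (L y) K) (hL0 : ∀ q ∈ K, 0 < L y q) :
    0 < marginal K f L y := by
  have hne : K.Nonempty := Set.nonempty_iff_ne_empty.2 fun h => by simp [h] at hf1
  obtain ⟨q₀, hq₀, hmin⟩ := hK.exists_isMinOn hne hL
  refine (mul_pos hf1 (hL0 q₀ hq₀)).trans_le ?_
  rw [← integral_mul_const]
  exact setIntegral_mono_on ((hf.mul_const _).integrableOn_compact hK)
    ((hf.mul hL).integrableOn_compact hK) hK.measurableSet
    fun q hq => mul_le_mul_of_nonneg_left (hmin hq) (hf0 q hq)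

variable [Fintype Y]

lemma sum_setIntegral_mul (hK : IsCompact K) (hf : ContinuousOn f K) (hL : IsLikelihoodOn K L)
    {G : Y → E → ℝ} (hG : ∀ y, ContinuousOn (G y) K) :
    ∑ y, ∫ q in K, f q * L y q * G y q = ∫ q in K, f q * ∑ y, L y q * G y q := by
  rw [← integral_finsetSum]
  · simp only [Finset.mul_sum, mul_assoc]
  · exact fun y _ => ((hf.mul (hL.continuousOn y)).mul (hG y)).integrableOn_compact hK

lemma sum_marginal (hK : IsCompact K) (hf : ContinuousOn f K) (hL : IsLikelihoodOn K L) :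
    ∑ y, marginal K f L y = ∫ q in K, f q := by
  have h := sum_setIntegral_mul hK hf hL (G := fun _ _ => 1) fun _ => continuousOn_const
  simp only [mul_one] at h
  exact h.trans (setIntegral_congr_fun hK.measurableSet fun q hq => by
    simp only [hL.sum_eq_one hq, mul_one])

lemma condEntropy_le (hK : IsCompact K) (hf : ContinuousOn f K) (hf0 : ∀ q ∈ K, 0 ≤ f q)
    (hf1 : ∫ q in K, f q = 1) (hL : IsLikelihoodOn K L) {ρ : Y → E → ℝ}
    (hρ : ∀ y, ContinuousOn (ρ y) K) (hρ1 : ∀ y, ∫ q in K, exp (-ρ y q) ≤ 1) :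
    condEntropy K f L ≤ ∫ q in K, f q * ∑ y, L y q * ρ y q := by
  rw [← sum_setIntegral_mul hK hf hL hρ]
  refine Finset.sum_le_sum fun y _ => ?_
  have hm := marginal_pos hK hf hf0 (hf1 ▸ one_pos) (hL.continuousOn y) fun q => hL.pos y
  have gibbs := neg_setIntegral_mul_log_le hK (g := posterior K f L y)
    ((hf.mul (hL.continuousOn y)).div_const _)
    (fun q hq => div_nonneg (mul_nonneg (hf0 q hq) (hL.pos y hq).le) hm.le)
    ((integral_div _ _).trans (div_self hm.ne')) (hρ y) (hρ1 y)
  refine (mul_le_mul_of_nonneg_left gibbs hm.le).trans_eq ?_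
  rw [← integral_const_mul]
  refine integral_congr_ae (Eventually.of_forall fun q => ?_)
  simp only [posterior]
  field_simp

lemma marginal_mul_neg_setIntegral_posterior (hK : IsCompact K) (hf : ContinuousOn f K)
    (hf0 : ∀ q ∈ K, 0 ≤ f q) (hf1 : 0 < ∫ q in K, f q) (hL : IsLikelihoodOn K L) (y : Y) :
    marginal K f L y * (-∫ q in K, posterior K f L y q * log (posterior K f L y q))
      = marginal K f L y * log (marginal K f L y) - marginal K (fun q => f q * log (f q)) L y
        - ∫ q in K, f q * L y q * log (L y q) := by
  have hm := marginal_pos hK hf hf0 hf1 (hL.continuousOn y) fun q => hL.pos y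
  have hLy := hL.continuousOn y
  have expand (q : E) (hq : q ∈ K) :
      marginal K f L y * (posterior K f L y q * log (posterior K f L y q))
        = f q * log (f q) * L y q + f q * L y q * log (L y q)
          - f q * L y q * log (marginal K f L y) := by
    have hLq := hL.pos y hq
    rcases (hf0 q hq).eq_or_lt with h0 | h0
    · simp [posterior, ← h0]
    · rw [posterior, log_div (by positivity) hm.ne', log_mul h0.ne' hLq.ne']
      field_simp
  have hfL := hf.mul hLy
  have iPrior : IntegrableOn (fun q => f q * log (f q) * L y q) K :=
    ((continuous_mul_log.comp_continuousOn hf).mul hLy).integrableOn_compact hK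
  have iLik : IntegrableOn (fun q => f q * L y q * log (L y q)) K :=
    (hfL.mul (hLy.log fun q hq => (hL.pos y hq).ne')).integrableOn_compact hK
  have iMarginal : IntegrableOn (fun q => f q * L y q * log (marginal K f L y)) K :=
    (hfL.mul_const _).integrableOn_compact hK
  have iSum : IntegrableOn
      (fun q => f q * log (f q) * L y q + f q * L y q * log (L y q)) K := iPrior.add iLik
  rw [mul_neg, ← integral_const_mul, setIntegral_congr_fun hK.measurableSet expand,
    integral_sub iSum iMarginal, integral_add iPrior iLik, integral_mul_const]
  simp only [marginal]
  ring

/-- By Gibbs' inequality on `Y`, the marginals of the prior may be replaced by those of any other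
density `f'`. -/
lemma le_condEntropy (hK : IsCompact K) (hf : ContinuousOn f K) (hf0 : ∀ q ∈ K, 0 ≤ f q)
    (hf1 : ∫ q in K, f q = 1) (hL : IsLikelihoodOn K L) {f' : E → ℝ} (hf' : ContinuousOn f' K)
    (hf'0 : ∀ q ∈ K, 0 ≤ f' q) (hf'1 : 0 < ∫ q in K, f' q) :
    (∫ q in K, f q * ∑ y, L y q * (log (marginal K f' L y) - log (L y q)))
      - (∫ q in K, f q * log (f q)) - log (∫ q in K, f' q) ≤ condEntropy K f L := by
  have hlog (y : Y) : ContinuousOn (fun q => log (L y q)) K :=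
    (hL.continuousOn y).log fun q hq => (hL.pos y hq).ne'
  have hpos : 0 < ∫ q in K, f q := hf1 ▸ one_pos
  have gibbs := sum_mul_log_sub_log_sum_le (s := Finset.univ) (z := marginal K f L)
    (z' := marginal K f' L)
    (fun y _ => (marginal_pos hK hf hf0 hpos (hL.continuousOn y) fun q => hL.pos y).le)
    ((sum_marginal hK hf hL).trans hf1)
    fun y _ => marginal_pos hK hf' hf'0 hf'1 (hL.continuousOn y) fun q => hL.pos y
  have split (y : Y) : ∫ q in K, f q * L y q * (log (marginal K f' L y) - log (L y q))
      = marginal K f L y * log (marginal K f' L y) - ∫ q in K, f q * L y q * log (L y q) := by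
    have hfL := hf.mul (hL.continuousOn y)
    have iMarginal : IntegrableOn (fun q => f q * L y q * log (marginal K f' L y)) K :=
      (hfL.mul_const _).integrableOn_compact hK
    have iLik : IntegrableOn (fun q => f q * L y q * log (L y q)) K :=
      (hfL.mul (hlog y)).integrableOn_compact hK
    simp only [mul_sub]
    rw [integral_sub iMarginal iLik, integral_mul_const]
    rfl
  rw [sum_marginal hK hf' hL] at gibbs
  rw [← sum_setIntegral_mul hK hf hL (G := fun y q => log (marginal K f' L y) - log (L y q))
      fun y => continuousOn_const.sub (hlog y),
    ← sum_marginal (f := fun q => f q * log (f q)) hK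
      (continuous_mul_log.comp_continuousOn hf) hL, condEntropy]
  simp only [marginal_mul_neg_setIntegral_posterior hK hf hf0 hpos hL, split,
    Finset.sum_sub_distrib]
  linarith

end CondEntropy

/-! ### Affine families and the upper bound -/

/-- The vector `c₀ + B q` of outcome weights of a single observation with parameter `q`. -/
def affineProb {ι κ : Type*} [Fintype κ] (B : Matrix ι κ ℝ) (c₀ : ι → ℝ) (q : κ → ℝ) : ι → ℝ :=
  c₀ + B *ᵥ q

/-- The likelihood of the sample `y` under the affine family of outcome weights `c₀ + B q`. -/
def likelihood {ι κ : Type*} [Fintype κ] (B : Matrix ι κ ℝ) (c₀ : ι → ℝ) {n : ℕ} (y : Fin n → ι)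
    (q : κ → ℝ) : ℝ :=
  ∏ i, affineProb B c₀ q (y i)

/-- `q ↦ c₀ + B q` is an identifiable affine family of probability vectors, parametrised by the
compact convex set `K`, with all probabilities at least `c > 0`. -/
structure IsAffineModel {ι κ : Type*} [Fintype ι] [Fintype κ] (K : Set (κ → ℝ))
    (B : Matrix ι κ ℝ) (c₀ : ι → ℝ) (c : ℝ) : Prop where
  isCompact : IsCompact K
  convex : Convex ℝ K
  injective : Function.Injective B.mulVec
  sum_slope (k : κ) : ∑ j, B j k = 0
  sum_base : ∑ j, c₀ j = 1
  lower_pos : 0 < c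
  le_affineProb {q : κ → ℝ} (hq : q ∈ K) (j : ι) : c ≤ affineProb B c₀ q j

section AffineModel

variable {ι κ : Type*} [Fintype κ] {B : Matrix ι κ ℝ} {c₀ : ι → ℝ}

lemma continuous_affineProb : Continuous (affineProb B c₀) :=
  continuous_const.add (continuous_const.matrix_mulVec continuous_id)

lemma continuous_likelihood {n : ℕ} (y : Fin n → ι) : Continuous (likelihood B c₀ y) :=
  continuous_finsetProd _ fun i _ => (continuous_apply (y i)).comp continuous_affineProb

lemma affineProb_add (q u : κ → ℝ) : affineProb B c₀ (q + u) = affineProb B c₀ q + B *ᵥ u := by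
  rw [affineProb, mulVec_add, ← add_assoc, affineProb]

lemma dev_affineProb [DecidableEq ι] {n : ℕ} (hn : n ≠ 0) (q : κ → ℝ) (y : Fin n → ι) :
    dev (affineProb B c₀ q) y = (n : ℝ) • (freq y - c₀ - B *ᵥ q) := by
  funext j
  simp only [dev, affineProb, freq, Pi.smul_apply, Pi.sub_apply, Pi.add_apply, smul_eq_mul]
  field_simp
  ring

variable [Fintype ι]

lemma sum_mulVec_eq_zero (hB0 : ∀ k, ∑ j, B j k = 0) (u : κ → ℝ) : ∑ j, (B *ᵥ u) j = 0 := by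
  simp only [mulVec, dotProduct]
  rw [Finset.sum_comm]
  simp [← Finset.sum_mul, hB0]

namespace IsAffineModel

variable {K : Set (κ → ℝ)} {c : ℝ} {q : κ → ℝ}

lemma affineProb_pos (hM : IsAffineModel K B c₀ c) (hq : q ∈ K) (j : ι) :
    0 < affineProb B c₀ q j :=
  hM.lower_pos.trans_le (hM.le_affineProb hq j)

lemma sum_affineProb (hM : IsAffineModel K B c₀ c) (q : κ → ℝ) : ∑ j, affineProb B c₀ q j = 1 := by
  simp only [affineProb, Pi.add_apply, Finset.sum_add_distrib, hM.sum_base,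
    sum_mulVec_eq_zero hM.sum_slope, add_zero]

lemma affineProb_mem_stdSimplex (hM : IsAffineModel K B c₀ c) (hq : q ∈ K) :
    affineProb B c₀ q ∈ stdSimplex ℝ ι :=
  ⟨fun j => (hM.affineProb_pos hq j).le, hM.sum_affineProb q⟩

lemma isLikelihoodOn (hM : IsAffineModel K B c₀ c) (n : ℕ) :
    IsLikelihoodOn K fun y : Fin n → ι => likelihood B c₀ y where
  continuousOn y := (continuous_likelihood y).continuousOn
  pos _ _ hq := Finset.prod_pos fun _ _ => hM.affineProb_pos hq _
  sum_eq_one {q} _ := by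
    simpa [sampleExp, likelihood] using sampleExp_const (n := n) (hM.sum_affineProb q) 1

end IsAffineModel

end AffineModel

section PluginDensity

variable {κ : Type*} [Fintype κ] [DecidableEq κ]

lemma setIntegral_gaussian_density_le_one {J : Matrix κ κ ℝ} (hJ : J.PosDef) (p : κ → ℝ)
    (s : Set (κ → ℝ)) :
    ∫ q in s, exp (-(1 / 2 * ((q - p) ⬝ᵥ J *ᵥ (q - p))
      + (Fintype.card κ / 2 * log (2 * π) - 1 / 2 * log J.det))) ≤ 1 := by
  set Z := ∫ w : κ → ℝ, exp (-(1 / 2) * (w ⬝ᵥ J *ᵥ w)) with hZ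
  have hZpos : 0 < Z := by
    rw [hZ, integral_gaussian_of_posDef hJ]
    have := hJ.det_pos
    positivity
  have hdensity (q : κ → ℝ) : exp (-(1 / 2 * ((q - p) ⬝ᵥ J *ᵥ (q - p))
      + (Fintype.card κ / 2 * log (2 * π) - 1 / 2 * log J.det)))
      = exp (-(1 / 2) * ((q - p) ⬝ᵥ J *ᵥ (q - p))) / Z := by
    rw [← log_integral_gaussian_of_posDef hJ, neg_add, exp_add, exp_neg (log _), ← hZ,
      exp_log hZpos, ← neg_mul, ← div_eq_mul_inv]
  simp only [hdensity]
  have hint := ((integrable_gaussian_of_posDef hJ).comp_sub_right p).div_const Z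
  refine (setIntegral_le_integral hint (Eventually.of_forall fun q => by positivity)).trans_eq ?_
  rw [integral_div, integral_sub_right_eq_self
    (fun q : κ → ℝ => exp (-(1 / 2) * (q ⬝ᵥ J *ᵥ q))) p, ← hZ, div_self hZpos.ne']

variable {ι : Type*} [Fintype ι] [DecidableEq ι] {B : Matrix ι κ ℝ} {c₀ : ι → ℝ} {n : ℕ}

lemma plugin_affineProb (hB : Function.Injective B.mulVec) {c : ℝ} (hc : 0 < c) (hn : n ≠ 0)
    (q : κ → ℝ) (y : Fin n → ι) :
    plugin B c (affineProb B c₀ q) y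
      = 1 / 2 * ((q - wls B (clamp c (freq y)) *ᵥ (freq y - c₀)) ⬝ᵥ
          ((n : ℝ) • fisher B (clamp c (freq y))) *ᵥ
            (q - wls B (clamp c (freq y)) *ᵥ (freq y - c₀)))
        - 1 / 2 * log (fisher B (clamp c (freq y))).det := by
  set v := clamp c (freq y)
  have herror : wls B v *ᵥ dev (affineProb B c₀ q) y
      = -((n : ℝ) • (q - wls B v *ᵥ (freq y - c₀))) := by
    rw [dev_affineProb hn, mulVec_smul, mulVec_sub, mulVec_mulVec,
      wls_mul hB (clamp_pos hc (freq y)), one_mulVec, ← smul_neg, neg_sub]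
  rw [plugin, quadStat, dotProduct_wlsGram_mulVec, herror]
  simp only [mulVec_neg, mulVec_smul, smul_mulVec, neg_dotProduct, dotProduct_neg, smul_dotProduct,
    dotProduct_smul, smul_eq_mul]
  field_simp
  ring

/-- For each sample, `plugin + (m/2) log (2π) - (m/2) log n` is the negative log-density of the
Gaussian centred at the weighted least squares estimate. -/
lemma setIntegral_exp_neg_plugin_le_one (hB : Function.Injective B.mulVec) {c : ℝ} (hc : 0 < c)
    (hn : n ≠ 0) (s : Set (κ → ℝ)) (y : Fin n → ι) :
    ∫ q in s, exp (-(plugin B c (affineProb B c₀ q) y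
      + (Fintype.card κ / 2 * log (2 * π) - Fintype.card κ / 2 * log n))) ≤ 1 := by
  have hJ := fisher_posDef hB (clamp_pos hc (freq y))
  have hn0 : (0 : ℝ) < n := by positivity
  refine le_of_eq_of_le ?_ (setIntegral_gaussian_density_le_one (hJ.smul hn0)
    (wls B (clamp c (freq y)) *ᵥ (freq y - c₀)) s)
  congr! 4 with q
  rw [plugin_affineProb hB hc hn, det_smul, log_mul (pow_ne_zero _ hn0.ne') hJ.det_pos.ne', log_pow]
  ring

end PluginDensity

section UpperBound

variable {ι κ : Type*} [Fintype ι] [DecidableEq ι] [Fintype κ] [DecidableEq κ] {K : Set (κ → ℝ)}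
  {B : Matrix ι κ ℝ} {c₀ : ι → ℝ} {c : ℝ} {f : (κ → ℝ) → ℝ}

lemma continuous_plugin_affineProb {n : ℕ} (y : Fin n → ι) :
    Continuous fun q => plugin B c (affineProb B c₀ q) y := by
  have hdev : Continuous fun q => dev (affineProb B c₀ q) y :=
    continuous_pi fun j => continuous_const.sub
      (continuous_const.mul ((continuous_apply j).comp continuous_affineProb))
  exact continuous_const.add
    (continuous_const.mul (hdev.dotProduct (continuous_const.matrix_mulVec hdev)))

lemma continuous_sampleExp_plugin (n : ℕ) :
    Continuous fun q => sampleExp (affineProb B c₀ q)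
      fun y : Fin n → ι => plugin B c (affineProb B c₀ q) y :=
  continuous_finsetSum _ fun y _ => (continuous_likelihood y).mul (continuous_plugin_affineProb y)

lemma condEntropy_add_log_le (hM : IsAffineModel K B c₀ c) (hf : ContinuousOn f K)
    (hf0 : ∀ q ∈ K, 0 ≤ f q) (hf1 : ∫ q in K, f q = 1) {n : ℕ} (hn : n ≠ 0) :
    condEntropy K f (fun y : Fin n → ι => likelihood B c₀ y) + Fintype.card κ / 2 * log n
      ≤ (∫ q in K, f q * sampleExp (affineProb B c₀ q)
          fun y : Fin n → ι => plugin B c (affineProb B c₀ q) y)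
        + Fintype.card κ / 2 * log (2 * π) := by
  set r : ℝ := Fintype.card κ / 2 * log (2 * π) - Fintype.card κ / 2 * log n with hr
  have hle := condEntropy_le hM.isCompact hf hf0 hf1 (hM.isLikelihoodOn n)
    (ρ := fun y q => plugin B c (affineProb B c₀ q) y + r)
    (fun y => ((continuous_plugin_affineProb y).add continuous_const).continuousOn)
    (setIntegral_exp_neg_plugin_le_one hM.injective hM.lower_pos hn K)
  have hexp (q : κ → ℝ) : ∑ y : Fin n → ι,
      likelihood B c₀ y q * (plugin B c (affineProb B c₀ q) y + r)
      = sampleExp (affineProb B c₀ q) (fun y : Fin n → ι => plugin B c (affineProb B c₀ q) y)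
        + r :=
    (sampleExp_add _ _).trans (congrArg _ (sampleExp_const (hM.sum_affineProb q) r))
  have hfE : IntegrableOn (fun q => f q * sampleExp (affineProb B c₀ q)
      fun y : Fin n → ι => plugin B c (affineProb B c₀ q) y) K :=
    (hf.mul (continuous_sampleExp_plugin n).continuousOn).integrableOn_compact hM.isCompact
  have hfr : IntegrableOn (fun q => f q * r) K :=
    (hf.mul_const r).integrableOn_compact hM.isCompact
  simp only [hexp] at hle
  simp only [mul_add] at hle
  rw [integral_add hfE hfr, integral_mul_const, hf1] at hle
  linarith

lemma tendsto_setIntegral_sampleExp_plugin (hM : IsAffineModel K B c₀ c)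
    (hf : ContinuousOn f K) :
    Tendsto (fun n : ℕ => ∫ q in K, f q * sampleExp (affineProb B c₀ q)
        fun y : Fin n → ι => plugin B c (affineProb B c₀ q) y) atTop
      (nhds (∫ q in K, f q *
        (-(1 / 2) * log (fisher B (affineProb B c₀ q)).det + Fintype.card κ / 2))) := by
  obtain ⟨C, hC⟩ := exists_abs_sampleExp_plugin_le hM.injective hM.lower_pos
  have hfi : IntegrableOn f K := hf.integrableOn_compact hM.isCompact
  refine tendsto_integral_filter_of_dominated_convergence (fun q => |f q| * C)
    (Eventually.of_forall fun n => ?_) ((eventually_ne_atTop 0).mono fun n hn => ?_)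
    (hfi.abs.mul_const C) (ae_restrict_of_forall_mem hM.isCompact.measurableSet fun q hq => ?_)
  · exact ((hf.mul (continuous_sampleExp_plugin n).continuousOn).integrableOn_compact
      hM.isCompact).aestronglyMeasurable
  · refine ae_restrict_of_forall_mem hM.isCompact.measurableSet fun q hq => ?_
    rw [Real.norm_eq_abs, abs_mul]
    exact mul_le_mul_of_nonneg_left (hC _ (hM.affineProb_mem_stdSimplex hq) n hn) (abs_nonneg _)
  · exact (tendsto_sampleExp_plugin hM.injective hM.sum_slope hM.lower_pos
      (hM.le_affineProb hq) (hM.sum_affineProb q)).const_mul (f q)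

end UpperBound

/-! ### The lower bound -/

section ChangeOfVariables

variable {E : Type*} [NormedAddCommGroup E] [NormedSpace ℝ E] [FiniteDimensional ℝ E]
  [MeasurableSpace E] [BorelSpace E] {μ : Measure E} [μ.IsAddHaarMeasure]

lemma pow_finrank_mul_setIntegral_le {K U : Set E} (hK : MeasurableSet K) (hU : MeasurableSet U)
    {h φ : E → ℝ} (hh : IntegrableOn h K μ) (hh0 : ∀ q ∈ K, 0 ≤ h q) {p : E} {s : ℝ} (hs : 0 < s)
    (hUK : ∀ u ∈ U, p + s • u ∈ K) (hφ : IntegrableOn φ U μ) (hφh : ∀ u ∈ U, φ u ≤ h (p + s • u)) :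
    s ^ Module.finrank ℝ E * ∫ u in U, φ u ∂μ ≤ ∫ q in K, h q ∂μ := by
  have hint : Integrable (fun u => K.indicator h (p + s • u)) μ :=
    (((integrable_indicator_iff hK).2 hh).comp_add_left p).comp_smul hs.ne'
  have hchange : ∫ u, K.indicator h (p + s • u) ∂μ
      = (s ^ Module.finrank ℝ E)⁻¹ * ∫ q in K, h q ∂μ := by
    rw [Measure.integral_comp_smul μ (fun u => K.indicator h (p + u)) s,
      integral_add_left_eq_self (K.indicator h) p, integral_indicator hK,
      abs_of_pos (by positivity), smul_eq_mul]
  have hle : ∫ u in U, φ u ∂μ ≤ ∫ u, K.indicator h (p + s • u) ∂μ :=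
    (setIntegral_mono_on hφ hint.integrableOn hU fun u hu =>
      (hφh u hu).trans (Set.indicator_of_mem (hUK u hu) h).ge).trans
      (setIntegral_le_integral hint
        (Eventually.of_forall fun u => Set.indicator_nonneg hh0 _))
  rw [hchange, inv_mul_eq_div, le_div_iff₀ (by positivity)] at hle
  linarith

end ChangeOfVariables

lemma le_log_marginal_sub_log {κ Y : Type*} [Fintype κ] {K U : Set (κ → ℝ)} {f : (κ → ℝ) → ℝ}
    {L : Y → (κ → ℝ) → ℝ} {y : Y} (hK : IsCompact K) (hU : MeasurableSet U)
    (hf : ContinuousOn f K) (hf0 : ∀ q ∈ K, 0 ≤ f q) (hL : ContinuousOn (L y) K)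
    (hL0 : ∀ q ∈ K, 0 < L y q) {p q : κ → ℝ} (hq : q ∈ K) {s φ : ℝ} (hs : 0 < s) (hφ : 0 < φ)
    (hUK : ∀ u ∈ U, p + s • u ∈ K) (hφf : ∀ u ∈ U, φ ≤ f (p + s • u)) {ψ : (κ → ℝ) → ℝ}
    (hψL : ∀ u ∈ U, ψ u ≤ log (L y (p + s • u)) - log (L y q))
    (hψ : IntegrableOn (fun u => exp (ψ u)) U) (hψ0 : 0 < ∫ u in U, exp (ψ u)) :
    Fintype.card κ * log s + log φ + log (∫ u in U, exp (ψ u))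
      ≤ log (marginal K f L y) - log (L y q) := by
  have hLq := hL0 q hq
  have hlocal (u : κ → ℝ) (hu : u ∈ U) :
      φ * L y q * exp (ψ u) ≤ f (p + s • u) * L y (p + s • u) := by
    have hpos := hL0 _ (hUK u hu)
    have hexp : exp (ψ u) ≤ L y (p + s • u) / L y q := by
      rw [← Real.le_log_iff_exp_le (by positivity), log_div hpos.ne' hLq.ne']
      exact hψL u hu
    rw [le_div_iff₀ hLq] at hexp
    calc φ * L y q * exp (ψ u) = φ * (exp (ψ u) * L y q) := by ring
      _ ≤ f (p + s • u) * L y (p + s • u) :=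
        mul_le_mul (hφf u hu) hexp (by positivity) (hf0 _ (hUK u hu))
  have hint : IntegrableOn (fun q => f q * L y q) K := (hf.mul hL).integrableOn_compact hK
  have hle := pow_finrank_mul_setIntegral_le hK.measurableSet hU hint
    (fun q hq => mul_nonneg (hf0 q hq) (hL0 q hq).le) hs hUK (hψ.const_mul (φ * L y q)) hlocal
  rw [integral_const_mul, Module.finrank_fintype_fun_eq_card] at hle
  have hlog := log_le_log (by positivity) hle
  rw [log_mul (by positivity) (by positivity), log_pow, log_mul (by positivity) hψ0.ne',
    log_mul hφ.ne' hLq.ne'] at hlog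
  rw [marginal]
  linarith

section LogLikelihood

lemma le_log_one_add_of_abs_le_half {x : ℝ} (hx : |x| ≤ 1 / 2) :
    x - x ^ 2 / 2 - 2 * |x| ^ 3 ≤ log (1 + x) := by
  have htaylor := Real.abs_log_sub_add_sum_range_le (x := -x) (by rw [abs_neg]; linarith) 2
  simp only [Finset.sum_range_succ, Finset.sum_range_zero, abs_neg, sub_neg_eq_add] at htaylor
  have hrem : |x| ^ (2 + 1) / (1 - |x|) ≤ 2 * |x| ^ 3 := by
    rw [div_le_iff₀ (by linarith)]
    have hgap : 0 ≤ |x| ^ 3 * (1 - 2 * |x|) := mul_nonneg (by positivity) (by linarith)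
    calc |x| ^ (2 + 1) ≤ |x| ^ (2 + 1) + |x| ^ 3 * (1 - 2 * |x|) := le_add_of_nonneg_right hgap
      _ = 2 * |x| ^ 3 * (1 - |x|) := by ring
  have hlow := (abs_le.1 (htaylor.trans hrem)).1
  norm_num at hlow
  linarith

lemma sub_sq_div_le_log_one_add {x c : ℝ} (hc : 0 < c) (hx : c ≤ 1 + x) :
    x - x ^ 2 / c ≤ log (1 + x) := by
  have hpos : 0 < 1 + x := hc.trans_le hx
  have hlog := Real.one_sub_inv_le_log_of_pos hpos
  have hsq : x ^ 2 / (1 + x) ≤ x ^ 2 / c := div_le_div_of_nonneg_left (sq_nonneg x) hc hx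
  have hinv : 1 - (1 + x)⁻¹ = x - x ^ 2 / (1 + x) := by field_simp; ring
  linarith

lemma sampleSum_mono {ι : Type*} {n : ℕ} {X Z : ι → ℝ} (h : ∀ j, X j ≤ Z j) (y : Fin n → ι) :
    sampleSum X y ≤ sampleSum Z y :=
  Finset.sum_le_sum fun i _ => h (y i)

variable {ι : Type*} [Fintype ι] [DecidableEq ι] {n : ℕ} {w x : ι → ℝ} {ρ : ℝ}

lemma sampleSum_eq_add_sum_dev_mul (w X : ι → ℝ) (y : Fin n → ι) :
    sampleSum X y = n * (∑ j, w j * X j) + ∑ j, dev w y j * X j := by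
  rw [sampleSum_eq_sum_cnt_mul, Finset.mul_sum, ← Finset.sum_add_distrib]
  exact Finset.sum_congr rfl fun j _ => by rw [dev]; ring

lemma abs_sum_dev_mul_le (hx : ∀ j, |x j| ≤ ρ) (y : Fin n → ι) :
    |∑ j, dev w y j * x j| ≤ ρ * ∑ j, |dev w y j| := by
  rw [Finset.mul_sum]
  refine (Finset.abs_sum_le_sum_abs _ _).trans (Finset.sum_le_sum fun j _ => ?_)
  rw [abs_mul, mul_comm]
  exact mul_le_mul_of_nonneg_right (hx j) (abs_nonneg _)

lemma neg_add_le_sampleSum_log_one_add (hx0 : ∑ j, w j * x j = 0) (hxρ : ∀ j, |x j| ≤ ρ) {c : ℝ}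
    (hc : 0 < c) (hxc : ∀ j, c ≤ 1 + x j) (y : Fin n → ι) :
    -(ρ * (∑ j, |dev w y j|) + n * (ρ ^ 2 / c)) ≤ sampleSum (fun j => log (1 + x j)) y := by
  have hlin := (abs_le.1 (abs_sum_dev_mul_le (w := w) hxρ y)).1
  have hlog (j : ι) : x j - ρ ^ 2 / c ≤ log (1 + x j) := by
    refine le_trans ?_ (sub_sq_div_le_log_one_add hc (hxc j))
    gcongr x j - ?_ / c
    exact sq_le_sq' (abs_le.1 (hxρ j)).1 (abs_le.1 (hxρ j)).2
  calc -(ρ * (∑ j, |dev w y j|) + n * (ρ ^ 2 / c))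
      ≤ sampleSum x y - n * (ρ ^ 2 / c) := by
        rw [sampleSum_eq_add_sum_dev_mul w, hx0]; linarith
    _ = sampleSum (fun j => x j - ρ ^ 2 / c) y := by
        simp [sampleSum, Finset.sum_sub_distrib]
    _ ≤ sampleSum (fun j => log (1 + x j)) y := sampleSum_mono hlog y

lemma sum_dev_mul_sub_le_sampleSum_log_one_add (hx0 : ∑ j, w j * x j = 0)
    (hxρ : ∀ j, |x j| ≤ ρ) (hρ : ρ ≤ 1 / 2) (y : Fin n → ι) :
    ∑ j, dev w y j * x j - n / 2 * (∑ j, w j * x j ^ 2)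
        - (ρ ^ 2 / 2 * (∑ j, |dev w y j|) + n * (2 * ρ ^ 3))
      ≤ sampleSum (fun j => log (1 + x j)) y := by
  have hsq (j : ι) : |x j ^ 2| ≤ ρ ^ 2 := by
    rw [abs_pow]; exact pow_le_pow_left₀ (abs_nonneg _) (hxρ j) 2
  have hquad := (abs_le.1 (abs_sum_dev_mul_le (w := w) hsq y)).2
  have hlog (j : ι) : x j - x j ^ 2 / 2 - 2 * ρ ^ 3 ≤ log (1 + x j) := by
    refine le_trans ?_ (le_log_one_add_of_abs_le_half ((hxρ j).trans hρ))
    gcongr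
    exact hxρ j
  have hexpand : sampleSum (fun j => x j - x j ^ 2 / 2 - 2 * ρ ^ 3) y
      = sampleSum x y - sampleSum (fun j => x j ^ 2) y / 2 - n * (2 * ρ ^ 3) := by
    simp [sampleSum, Finset.sum_sub_distrib, Finset.sum_div]
  refine le_trans ?_ (sampleSum_mono hlog y)
  rw [hexpand, sampleSum_eq_add_sum_dev_mul w, sampleSum_eq_add_sum_dev_mul w, hx0]
  linarith

end LogLikelihood

/-- The relative change of the outcome weights of the affine family when the parameter moves from
`q` to `q + u`. -/
def relChange {ι κ : Type*} [Fintype κ] (B : Matrix ι κ ℝ) (c₀ : ι → ℝ) (q u : κ → ℝ) (j : ι) :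
    ℝ :=
  (B *ᵥ u) j / affineProb B c₀ q j

section RelChange

variable {ι κ : Type*} [Fintype κ] {B : Matrix ι κ ℝ} {c₀ : ι → ℝ} {q : κ → ℝ}

lemma relChange_smul (s : ℝ) (u : κ → ℝ) :
    relChange B c₀ q (s • u) = s • relChange B c₀ q u := by
  funext j
  simp [relChange, mulVec_smul, mul_div_assoc]

lemma abs_relChange_le {c M : ℝ} (hc : 0 < c) (hq : ∀ j, c ≤ affineProb B c₀ q j) {u : κ → ℝ}
    {j : ι} (hu : |(B *ᵥ u) j| ≤ M * c) : |relChange B c₀ q u j| ≤ M := by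
  have hpos := hc.trans_le (hq j)
  have hM : 0 ≤ M := nonneg_of_mul_nonneg_left ((abs_nonneg _).trans hu) hc
  rw [relChange, abs_div, abs_of_pos hpos, div_le_iff₀ hpos]
  exact hu.trans (mul_le_mul_of_nonneg_left (hq j) hM)

lemma one_add_relChange (hq : ∀ j, 0 < affineProb B c₀ q j) (u : κ → ℝ) (j : ι) :
    1 + relChange B c₀ q u j = affineProb B c₀ (q + u) j / affineProb B c₀ q j := by
  rw [relChange, affineProb_add, Pi.add_apply, add_div, div_self (hq j).ne']

lemma log_likelihood_add_sub {n : ℕ} (hq : ∀ j, 0 < affineProb B c₀ q j) {u : κ → ℝ}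
    (hu : ∀ j, 0 < affineProb B c₀ (q + u) j) (y : Fin n → ι) :
    log (likelihood B c₀ y (q + u)) - log (likelihood B c₀ y q)
      = sampleSum (fun j => log (1 + relChange B c₀ q u j)) y := by
  simp only [likelihood, sampleSum, one_add_relChange hq]
  rw [log_prod fun i _ => (hu (y i)).ne', log_prod fun i _ => (hq (y i)).ne',
    ← Finset.sum_sub_distrib]
  exact Finset.sum_congr rfl fun i _ => (log_div (hu _).ne' (hq _).ne').symm

variable [Fintype ι]

lemma sum_mul_relChange (hB : ∀ k, ∑ j, B j k = 0) (hq : ∀ j, 0 < affineProb B c₀ q j)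
    (u : κ → ℝ) : ∑ j, affineProb B c₀ q j * relChange B c₀ q u j = 0 := by
  simp only [relChange, mul_div_cancel₀ _ (hq _).ne', sum_mulVec_eq_zero hB]

variable [DecidableEq ι]

lemma sum_mul_relChange_sq (hq : ∀ j, 0 < affineProb B c₀ q j) (u : κ → ℝ) :
    ∑ j, affineProb B c₀ q j * relChange B c₀ q u j ^ 2
      = u ⬝ᵥ fisher B (affineProb B c₀ q) *ᵥ u := by
  rw [dotProduct_fisher_mulVec]
  refine Finset.sum_congr rfl fun j _ => ?_
  have := (hq j).ne'
  rw [relChange]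
  field_simp

variable [DecidableEq κ]

lemma sum_mul_relChange_eq_dotProduct (hB : Function.Injective B.mulVec)
    (hq : ∀ j, 0 < affineProb B c₀ q j) (d : ι → ℝ) (u : κ → ℝ) :
    ∑ j, d j * relChange B c₀ q u j
      = u ⬝ᵥ fisher B (affineProb B c₀ q) *ᵥ (wls B (affineProb B c₀ q) *ᵥ d) := by
  rw [mulVec_mulVec, fisher_mul_wls hB hq, ← mulVec_mulVec, dotProduct_mulVec, vecMul_transpose]
  refine Finset.sum_congr rfl fun j _ => ?_
  rw [mulVec_diagonal, relChange]
  ring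

end RelChange

/-- The mean under the parameter `q` of the log-ratio of the marginal likelihood of a sample of size
`n` to its likelihood at `q`, renormalised by `(m / 2) log n`. -/
def logRatio {ι κ : Type*} [Fintype ι] [Fintype κ] (K : Set (κ → ℝ)) (B : Matrix ι κ ℝ)
    (c₀ : ι → ℝ) (f : (κ → ℝ) → ℝ) (n : ℕ) (q : κ → ℝ) : ℝ :=
  sampleExp (affineProb B c₀ q) (fun y : Fin n → ι =>
    log (marginal K f (fun y => likelihood B c₀ y) y) - log (likelihood B c₀ y q))
    + Fintype.card κ / 2 * log n

/-- The rescaled error `√n (q̂ - q)` of the weighted least squares estimate `q̂` of the parameter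
`q` with `w = c₀ + B q`. -/
def estError {ι κ : Type*} [Fintype ι] [DecidableEq ι] [Fintype κ] [DecidableEq κ]
    (B : Matrix ι κ ℝ) (w : ι → ℝ) {n : ℕ} (y : Fin n → ι) : κ → ℝ :=
  (1 / √n) • wls B w *ᵥ dev w y

lemma log_one_div_sqrt (n : ℕ) : log (1 / √(n : ℝ)) = -(1 / 2 * log n) := by
  rw [one_div, log_inv, log_sqrt n.cast_nonneg]
  ring

section UniformBound

variable {ι κ : Type*} [Fintype ι] [Fintype κ] {K : Set (κ → ℝ)} {B : Matrix ι κ ℝ} {c₀ : ι → ℝ}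
  {c : ℝ} {f : (κ → ℝ) → ℝ} {n : ℕ} {q : κ → ℝ}

lemma IsAffineModel.add_one_div_sqrt_smul_mem (hM : IsAffineModel K B c₀ c) (hn : n ≠ 0)
    (hq : q ∈ K) {u : κ → ℝ} (hu : q + u ∈ K) : q + (1 / √n) • u ∈ K := by
  refine hM.convex.add_smul_mem hq hu ⟨by positivity, ?_⟩
  rw [div_le_one (by positivity), Real.one_le_sqrt]
  exact_mod_cast Nat.one_le_iff_ne_zero.2 hn

lemma IsAffineModel.abs_mulVec_le_one (hM : IsAffineModel K B c₀ c) (hq : q ∈ K) {u : κ → ℝ}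
    (hu : q + u ∈ K) (j : ι) : |(B *ᵥ u) j| ≤ 1 := by
  have hdiff : (B *ᵥ u) j = affineProb B c₀ (q + u) j - affineProb B c₀ q j := by
    rw [affineProb_add, Pi.add_apply, add_sub_cancel_left]
  rw [hdiff, abs_le]
  constructor <;> linarith [hM.affineProb_pos hq j, hM.affineProb_pos hu j,
    le_one_of_mem_stdSimplex (hM.affineProb_mem_stdSimplex hq) j,
    le_one_of_mem_stdSimplex (hM.affineProb_mem_stdSimplex hu) j]

variable [DecidableEq ι]

/-- In contrast to the second-order bound, this one holds for every `n` and up to the boundary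
of `K`. -/
lemma neg_le_log_likelihood_add_sub (hM : IsAffineModel K B c₀ c) (hn : n ≠ 0) (hq : q ∈ K)
    {u : κ → ℝ} (hu : q + u ∈ K) (y : Fin n → ι) :
    -(1 / (c * √n) * (∑ j, |dev (affineProb B c₀ q) y j|) + 1 / c ^ 3)
      ≤ log (likelihood B c₀ y (q + (1 / √n) • u)) - log (likelihood B c₀ y q) := by
  have : 0 < √(n : ℝ) := by positivity
  have hc := hM.lower_pos
  have hmem := hM.add_one_div_sqrt_smul_mem hn hq hu
  have hrel (j : ι) : |relChange B c₀ q ((1 / √n) • u) j| ≤ 1 / (c * √n) := by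
    rw [relChange_smul, Pi.smul_apply, smul_eq_mul, abs_mul, abs_of_pos (by positivity)]
    refine (mul_le_mul_of_nonneg_left (abs_relChange_le hc (hM.le_affineProb hq) (M := 1 / c)
      ((hM.abs_mulVec_le_one hq hu j).trans_eq (one_div_mul_cancel hc.ne').symm))
      (by positivity)).trans_eq ?_
    field_simp
  have hlower (j : ι) : c ≤ 1 + relChange B c₀ q ((1 / √n) • u) j := by
    rw [one_add_relChange (hM.affineProb_pos hq), le_div_iff₀ (hM.affineProb_pos hq j)]
    exact (mul_le_of_le_one_right hc.le (le_one_of_mem_stdSimplex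
      (hM.affineProb_mem_stdSimplex hq) j)).trans (hM.le_affineProb hmem j)
  rw [log_likelihood_add_sub (hM.affineProb_pos hq) (hM.affineProb_pos hmem)]
  refine le_of_eq_of_le ?_ (neg_add_le_sampleSum_log_one_add
    (sum_mul_relChange hM.sum_slope (hM.affineProb_pos hq) _) hrel hc hlower y)
  have hsq : √(n : ℝ) ^ 2 = n := Real.sq_sqrt n.cast_nonneg
  congr 2
  field_simp
  rw [hsq]

lemma sub_mul_sum_abs_dev_le_log_marginal_sub (hM : IsAffineModel K B c₀ c)
    (hf : ContinuousOn f K) {ε : ℝ} (hε : 0 < ε) (hfε : ∀ q ∈ K, ε ≤ f q)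
    (hV : 0 < volume.real K) (hn : n ≠ 0) (hq : q ∈ K) (y : Fin n → ι) :
    (log ε + log (volume.real K) - 1 / c ^ 3 - Fintype.card κ / 2 * log n)
        - 1 / (c * √n) * (∑ j, |dev (affineProb B c₀ q) y j|)
      ≤ log (marginal K f (fun y => likelihood B c₀ y) y) - log (likelihood B c₀ y q) := by
  set U : Set (κ → ℝ) := (fun u => q + u) ⁻¹' K
  set e := 1 / (c * √n) * (∑ j, |dev (affineProb B c₀ q) y j|) + 1 / c ^ 3
  have hvol : volume U = volume K := measure_preimage_add volume q K
  have hmass : ∫ _ in U, exp (-e) = volume.real K * exp (-e) := by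
    rw [setIntegral_const, smul_eq_mul, Measure.real, hvol, Measure.real]
  have hmem (u : κ → ℝ) (hu : u ∈ U) : q + (1 / √n) • u ∈ K :=
    hM.add_one_div_sqrt_smul_mem hn hq hu
  have hle := le_log_marginal_sub_log (y := y) (L := fun y => likelihood B c₀ y) (ψ := fun _ => -e)
    hM.isCompact (measurable_const_add q hM.isCompact.measurableSet) hf
    (fun p hp => hε.le.trans (hfε p hp)) (continuous_likelihood y).continuousOn
    (fun p hp => (hM.isLikelihoodOn n).pos y hp) hq (by positivity) hε hmem
    (fun u hu => hfε _ (hmem u hu)) (fun u hu => neg_le_log_likelihood_add_sub hM hn hq hu y)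
    (integrableOn_const (hvol.trans_lt hM.isCompact.measure_lt_top).ne) (by rw [hmass]; positivity)
  rw [hmass, log_mul hV.ne' (exp_pos _).ne', log_exp, log_one_div_sqrt] at hle
  linarith

end UniformBound

lemma exists_le_logRatio {ι κ : Type*} [Fintype ι] [Fintype κ] {K : Set (κ → ℝ)}
    {B : Matrix ι κ ℝ} {c₀ : ι → ℝ} {c : ℝ} {f : (κ → ℝ) → ℝ} (hM : IsAffineModel K B c₀ c)
    (hf : ContinuousOn f K) {ε : ℝ} (hε : 0 < ε) (hfε : ∀ q ∈ K, ε ≤ f q)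
    (hV : 0 < volume.real K) :
    ∃ C, ∀ n ≠ 0, ∀ q ∈ K, C ≤ logRatio K B c₀ f n q := by
  classical
  refine ⟨log ε + log (volume.real K) - 1 / c ^ 3 - Fintype.card ι / c, fun n hn q hq => ?_⟩
  have : 0 < √(n : ℝ) := by positivity
  have hc := hM.lower_pos
  have hw := hM.affineProb_mem_stdSimplex hq
  have hmean := sampleExp_mono hw.1 fun y : Fin n → ι =>
    sub_mul_sum_abs_dev_le_log_marginal_sub hM hf hε hfε hV hn hq y
  rw [sampleExp_sub, sampleExp_const hw.2, sampleExp_const_mul] at hmean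
  have hdev : 1 / (c * √n) * sampleExp (affineProb B c₀ q)
      (fun y : Fin n → ι => ∑ j, |dev (affineProb B c₀ q) y j|) ≤ Fintype.card ι / c := by
    refine (mul_le_mul_of_nonneg_left (sampleExp_sum_abs_dev_le hw (Nat.pos_of_ne_zero hn))
      (by positivity)).trans_eq ?_
    field_simp
  rw [logRatio]
  linarith

section Centre

variable {κ : Type*} [Fintype κ] {J : Matrix κ κ ℝ}

lemma dotProduct_mulVec_add_sub (hJ : Jᵀ = J) (v t z : κ → ℝ) :
    (t + z) ⬝ᵥ J *ᵥ v - 1 / 2 * ((t + z) ⬝ᵥ J *ᵥ (t + z))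
      = (t ⬝ᵥ J *ᵥ v - 1 / 2 * (t ⬝ᵥ J *ᵥ t))
        + (-(1 / 2) * (z ⬝ᵥ J *ᵥ z) + (J *ᵥ (v - t)) ⬝ᵥ z) := by
  have hsymm : t ⬝ᵥ J *ᵥ z = z ⬝ᵥ J *ᵥ t := by
    rw [dotProduct_mulVec, ← mulVec_transpose, hJ, dotProduct_comm]
  rw [dotProduct_comm (J *ᵥ (v - t))]
  simp only [mulVec_add, mulVec_sub, add_dotProduct, dotProduct_add, dotProduct_sub, hsymm]
  ring

/-- The centre is the maximiser `v` if that lies in the ball, and `0` otherwise; in the latter case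
the loss is controlled because `1 ≤ (∑ v_k²) / R²`. -/
lemma exists_norm_le_half_dotProduct_mulVec_sub_le (J : Matrix κ κ ℝ) (v : κ → ℝ) {R : ℝ}
    (hR : 0 < R) :
    ∃ t : κ → ℝ, ‖t‖ ≤ R ∧
      1 / 2 * (v ⬝ᵥ J *ᵥ v) - (∑ j, ∑ k, |J j k|) / (2 * R ^ 2) * (∑ k, v k ^ 2) ^ 2
        ≤ t ⬝ᵥ J *ᵥ v - 1 / 2 * (t ⬝ᵥ J *ᵥ t) := by
  set D := ∑ k, v k ^ 2
  have : 0 ≤ D := Finset.sum_nonneg fun _ _ => sq_nonneg _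
  have : 0 ≤ ∑ j, ∑ k, |J j k| :=
    Finset.sum_nonneg fun _ _ => Finset.sum_nonneg fun _ _ => abs_nonneg _
  by_cases hv : ‖v‖ ≤ R
  · refine ⟨v, hv, ?_⟩
    have : 0 ≤ (∑ j, ∑ k, |J j k|) / (2 * R ^ 2) * D ^ 2 := by positivity
    linarith
  · refine ⟨0, by simpa using hR.le, ?_⟩
    obtain ⟨k, hk⟩ : ∃ k, R < ‖v k‖ := by
      by_contra! h
      exact hv ((pi_norm_le_iff_of_nonneg hR.le).2 h)
    have hRD : R ^ 2 ≤ D := calc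
      R ^ 2 ≤ ‖v k‖ ^ 2 := pow_le_pow_left₀ hR.le hk.le 2
      _ = v k ^ 2 := by rw [Real.norm_eq_abs, sq_abs]
      _ ≤ D := Finset.single_le_sum (fun k _ => sq_nonneg (v k)) (Finset.mem_univ k)
    have hquad : v ⬝ᵥ J *ᵥ v ≤ (∑ j, ∑ k, |J j k|) * D * (D / R ^ 2) :=
      ((le_abs_self _).trans (abs_dotProduct_mulVec_self_le J v)).trans
        (le_mul_of_one_le_right (by positivity) ((one_le_div (by positivity)).2 hRD))
    have hloss : (∑ j, ∑ k, |J j k|) / (2 * R ^ 2) * D ^ 2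
        = 1 / 2 * ((∑ j, ∑ k, |J j k|) * D * (D / R ^ 2)) := by
      field_simp
    simp only [zero_dotProduct, mul_zero, sub_zero]
    linarith

lemma integrableOn_exp_add_tilted (J : Matrix κ κ ℝ) (a : ℝ) (x : κ → ℝ) (r : ℝ) :
    IntegrableOn (fun z => exp (a + (-(1 / 2) * (z ⬝ᵥ J *ᵥ z) + x ⬝ᵥ z)))
      (Metric.closedBall 0 r) :=
  (continuous_const.add ((continuous_const.mul (continuous_dotProduct_mulVec_self J)).add
    (continuous_const.dotProduct continuous_id))).rexp.continuousOn.integrableOn_compact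
      (isCompact_closedBall _ _)

lemma setIntegral_closedBall_exp_pos {g : (κ → ℝ) → ℝ} {r : ℝ} (hr : 0 < r)
    (hg : IntegrableOn (fun z => exp (g z)) (Metric.closedBall 0 r)) :
    0 < ∫ z in Metric.closedBall 0 r, exp (g z) :=
  have : NeZero (volume.restrict (Metric.closedBall (0 : κ → ℝ) r)) :=
    ⟨Measure.restrict_eq_zero.not.2 (Metric.measure_closedBall_pos volume _ hr).ne'⟩
  integral_exp_pos hg

lemma add_log_setIntegral_gaussian_le (J : Matrix κ κ ℝ) (a : ℝ) (x : κ → ℝ) {r : ℝ}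
    (hr : 0 < r) :
    a + log (∫ z in Metric.closedBall (0 : κ → ℝ) r, exp (-(1 / 2) * (z ⬝ᵥ J *ᵥ z)))
      ≤ log (∫ z in Metric.closedBall 0 r, exp (a + (-(1 / 2) * (z ⬝ᵥ J *ᵥ z) + x ⬝ᵥ z))) := by
  have hpos : 0 < ∫ z in Metric.closedBall (0 : κ → ℝ) r, exp (-(1 / 2) * (z ⬝ᵥ J *ᵥ z)) :=
    setIntegral_closedBall_exp_pos hr (by simpa using integrableOn_exp_add_tilted J 0 0 r)
  have hle := setIntegral_gaussian_le_setIntegral_tilted J x r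
  simp only [exp_add a]
  rw [integral_const_mul, log_mul (exp_pos a).ne' (hpos.trans_le hle).ne', log_exp]
  exact add_le_add_right (log_le_log hpos hle) a

end Centre

section EstError

variable {ι κ : Type*} [Fintype ι] [DecidableEq ι] [Fintype κ] [DecidableEq κ] {B : Matrix ι κ ℝ}
  {w : ι → ℝ} {n : ℕ}

lemma sampleExp_estError_dotProduct_fisher (hB : Function.Injective B.mulVec)
    (hB0 : ∀ k, ∑ j, B j k = 0) (hw : ∀ j, 0 < w j) (hw1 : ∑ j, w j = 1) (hn : n ≠ 0) :
    sampleExp w (fun y : Fin n → ι => estError B w y ⬝ᵥ fisher B w *ᵥ estError B w y)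
      = Fintype.card κ := by
  have hgram (y : Fin n → ι) : estError B w y ⬝ᵥ fisher B w *ᵥ estError B w y
      = 1 / n * (dev w y ⬝ᵥ wlsGram B w *ᵥ dev w y) := by
    rw [dotProduct_wlsGram_mulVec, estError, mulVec_smul, smul_dotProduct, dotProduct_smul,
      smul_smul, div_mul_div_comm, one_mul, Real.mul_self_sqrt n.cast_nonneg, smul_eq_mul]
  have hmean : wlsGram B w *ᵥ w = 0 := by
    rw [wlsGram, ← mulVec_mulVec, wls_mulVec_self hB0 hw, mulVec_zero]
  simp only [hgram]
  rw [sampleExp_const_mul, sampleExp_dotProduct_mulVec_dev hw1, trace_wlsGram_mul_diagonal hB hw,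
    hmean, dotProduct_zero, sub_zero]
  field_simp

lemma exists_sampleExp_sq_sum_estError_sq_le (B : Matrix ι κ ℝ) (hw : w ∈ stdSimplex ℝ ι) :
    ∃ A, 0 ≤ A ∧ ∀ n ≠ 0,
      sampleExp w (fun y : Fin n → ι => (∑ k, estError B w y k ^ 2) ^ 2) ≤ A := by
  set C := ∑ j, ∑ k, |((wls B w)ᵀ * wls B w) j k|
  have : 0 ≤ C := Finset.sum_nonneg fun _ _ => Finset.sum_nonneg fun _ _ => abs_nonneg _
  refine ⟨C ^ 2 * (Fintype.card ι * (Fintype.card ι * 3)), by positivity, fun n hn => ?_⟩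
  have : (0 : ℝ) < n := by positivity
  have hnorm (y : Fin n → ι) : ∑ k, estError B w y k ^ 2
      = 1 / n * (dev w y ⬝ᵥ ((wls B w)ᵀ * wls B w) *ᵥ dev w y) := by
    rw [← mulVec_mulVec, dotProduct_mulVec, vecMul_transpose, dotProduct, Finset.mul_sum]
    refine Finset.sum_congr rfl fun k _ => ?_
    rw [estError, Pi.smul_apply, smul_eq_mul, mul_pow, div_pow, one_pow,
      Real.sq_sqrt n.cast_nonneg, sq ((wls B w *ᵥ dev w y) k)]
  have hbound (y : Fin n → ι) :
      (∑ k, estError B w y k ^ 2) ^ 2 ≤ C ^ 2 / n ^ 2 * (∑ j, dev w y j ^ 2) ^ 2 := by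
    rw [hnorm, mul_pow, ← sq_abs (dev w y ⬝ᵥ _)]
    calc (1 / (n : ℝ)) ^ 2 * |dev w y ⬝ᵥ ((wls B w)ᵀ * wls B w) *ᵥ dev w y| ^ 2
        ≤ (1 / (n : ℝ)) ^ 2 * (C * ∑ j, dev w y j ^ 2) ^ 2 := by
          gcongr; exact abs_dotProduct_mulVec_self_le _ _
      _ = C ^ 2 / n ^ 2 * (∑ j, dev w y j ^ 2) ^ 2 := by ring
  refine (sampleExp_mono hw.1 hbound).trans ?_
  rw [sampleExp_const_mul]
  refine (mul_le_mul_of_nonneg_left (sampleExp_sq_sum_dev_sq_le hw) (by positivity)).trans_eq ?_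
  field_simp

end EstError

section LocalBound

variable {ι κ : Type*} [Fintype ι] [DecidableEq ι] [Fintype κ] [DecidableEq κ] {K : Set (κ → ℝ)}
  {B : Matrix ι κ ℝ} {c₀ : ι → ℝ} {c : ℝ} {f : (κ → ℝ) → ℝ} {n : ℕ} {q : κ → ℝ} {M : ℝ}

/-- Local asymptotic normality, with an explicit error term. -/
lemma quadratic_sub_le_log_likelihood_add_sub (hM : IsAffineModel K B c₀ c) (hn : n ≠ 0)
    (hq : q ∈ K) (hMn : 2 * M ≤ √n) {u : κ → ℝ} (hu : q + (1 / √n) • u ∈ K)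
    (hBu : ∀ j, |(B *ᵥ u) j| ≤ M * c) (y : Fin n → ι) :
    u ⬝ᵥ fisher B (affineProb B c₀ q) *ᵥ estError B (affineProb B c₀ q) y
        - 1 / 2 * (u ⬝ᵥ fisher B (affineProb B c₀ q) *ᵥ u)
        - (M ^ 2 / (2 * n) * (∑ j, |dev (affineProb B c₀ q) y j|) + 2 * M ^ 3 / √n)
      ≤ log (likelihood B c₀ y (q + (1 / √n) • u)) - log (likelihood B c₀ y q) := by
  have hs0 : 0 < √(n : ℝ) := by positivity
  have hsq : √(n : ℝ) ^ 2 = n := Real.sq_sqrt n.cast_nonneg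
  have hpos := hM.affineProb_pos hq
  have hrel (j : ι) : |relChange B c₀ q ((1 / √n) • u) j| ≤ M / √n := by
    rw [relChange_smul, Pi.smul_apply, smul_eq_mul, abs_mul, abs_of_pos (by positivity),
      one_div_mul_eq_div]
    exact div_le_div_of_nonneg_right (abs_relChange_le hM.lower_pos (hM.le_affineProb hq) (hBu j))
      hs0.le
  have hhalf : M / √n ≤ 1 / 2 := by
    rw [div_le_iff₀ hs0]; linarith
  rw [log_likelihood_add_sub hpos (hM.affineProb_pos hu)]
  refine le_of_eq_of_le ?_ (sum_dev_mul_sub_le_sampleSum_log_one_add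
    (sum_mul_relChange hM.sum_slope hpos _) hrel hhalf y)
  rw [sum_mul_relChange_eq_dotProduct hM.injective hpos, sum_mul_relChange_sq hpos, estError]
  simp only [mulVec_smul, smul_dotProduct, dotProduct_smul, smul_eq_mul]
  congr 1
  · congr 1
    field_simp
    rw [hsq]
  · field_simp
    rw [hsq]

lemma le_log_marginal_sub_log_likelihood (hM : IsAffineModel K B c₀ c) (hf : ContinuousOn f K)
    (hf0 : ∀ q ∈ K, 0 ≤ f q) (hn : n ≠ 0) (hq : q ∈ K) {R r φ : ℝ} (hR : 0 < R) (hr : 0 < r)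
    (hφ : 0 < φ) (hMn : 2 * M ≤ √n)
    (hlocal : ∀ u : κ → ℝ, ‖u‖ ≤ R + r → q + (1 / √n) • u ∈ K ∧ φ ≤ f (q + (1 / √n) • u) ∧
      ∀ j, |(B *ᵥ u) j| ≤ M * c) (y : Fin n → ι) :
    log φ + log (∫ z in Metric.closedBall (0 : κ → ℝ) r,
        exp (-(1 / 2) * (z ⬝ᵥ fisher B (affineProb B c₀ q) *ᵥ z)))
      - Fintype.card κ / 2 * log n - 2 * M ^ 3 / √n
      + 1 / 2 * (estError B (affineProb B c₀ q) y ⬝ᵥ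
          fisher B (affineProb B c₀ q) *ᵥ estError B (affineProb B c₀ q) y)
      - (∑ j, ∑ k, |fisher B (affineProb B c₀ q) j k|) / (2 * R ^ 2)
          * (∑ k, estError B (affineProb B c₀ q) y k ^ 2) ^ 2
      - M ^ 2 / (2 * n) * (∑ j, |dev (affineProb B c₀ q) y j|)
      ≤ log (marginal K f (fun y => likelihood B c₀ y) y) - log (likelihood B c₀ y q) := by
  set J := fisher B (affineProb B c₀ q)
  set v := estError B (affineProb B c₀ q) y
  set e := M ^ 2 / (2 * n) * (∑ j, |dev (affineProb B c₀ q) y j|) + 2 * M ^ 3 / √n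
  obtain ⟨t, htR, ht⟩ := exists_norm_le_half_dotProduct_mulVec_sub_le J v hR
  set a := t ⬝ᵥ J *ᵥ v - 1 / 2 * (t ⬝ᵥ J *ᵥ t) - e with ha
  have hshift (z : κ → ℝ) : q + (1 / √n) • t + (1 / √n) • z = q + (1 / √n) • (t + z) := by
    rw [smul_add, add_assoc]
  have hball (z : κ → ℝ) (hz : z ∈ Metric.closedBall 0 r) : ‖t + z‖ ≤ R + r :=
    (norm_add_le t z).trans (add_le_add htR (mem_closedBall_zero_iff.1 hz))
  have hint := integrableOn_exp_add_tilted J a (J *ᵥ (v - t)) r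
  have hle := le_log_marginal_sub_log (y := y) (L := fun y => likelihood B c₀ y)
    (p := q + (1 / √n) • t) (s := 1 / √n) hM.isCompact Metric.isClosed_closedBall.measurableSet hf
    hf0 (continuous_likelihood y).continuousOn (fun p hp => (hM.isLikelihoodOn n).pos y hp) hq
    (by positivity) hφ (fun z hz => hshift z ▸ (hlocal _ (hball z hz)).1)
    (fun z hz => hshift z ▸ (hlocal _ (hball z hz)).2.1) (fun z hz => ?_) hint
    (setIntegral_closedBall_exp_pos hr hint)
  · have hgauss := add_log_setIntegral_gaussian_le J a (J *ᵥ (v - t)) hr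
    rw [log_one_div_sqrt] at hle
    linarith
  · obtain ⟨hK, -, hBu⟩ := hlocal _ (hball z hz)
    rw [hshift]
    refine le_of_eq_of_le ?_ (quadratic_sub_le_log_likelihood_add_sub hM hn hq hMn hK hBu y)
    rw [dotProduct_mulVec_add_sub (fisher_transpose B _)]
    ring

/-- The expected quadratic term contributes `m / 2`. -/
lemma le_logRatio (hM : IsAffineModel K B c₀ c) (hf : ContinuousOn f K)
    (hf0 : ∀ q ∈ K, 0 ≤ f q) (hn : n ≠ 0) (hq : q ∈ K) {R r φ A : ℝ} (hR : 0 < R) (hr : 0 < r)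
    (hφ : 0 < φ) (hMn : 2 * M ≤ √n)
    (hlocal : ∀ u : κ → ℝ, ‖u‖ ≤ R + r → q + (1 / √n) • u ∈ K ∧ φ ≤ f (q + (1 / √n) • u) ∧
      ∀ j, |(B *ᵥ u) j| ≤ M * c)
    (hA : sampleExp (affineProb B c₀ q)
      (fun y : Fin n → ι => (∑ k, estError B (affineProb B c₀ q) y k ^ 2) ^ 2) ≤ A) :
    log φ + log (∫ z in Metric.closedBall (0 : κ → ℝ) r,
        exp (-(1 / 2) * (z ⬝ᵥ fisher B (affineProb B c₀ q) *ᵥ z))) + Fintype.card κ / 2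
      - (∑ j, ∑ k, |fisher B (affineProb B c₀ q) j k|) / (2 * R ^ 2) * A
      - (Fintype.card ι * M ^ 2 / 2 + 2 * M ^ 3) / √n ≤ logRatio K B c₀ f n q := by
  have hw := hM.affineProb_mem_stdSimplex hq
  have hmean := sampleExp_mono hw.1 fun y : Fin n → ι =>
    le_log_marginal_sub_log_likelihood hM hf hf0 hn hq hR hr hφ hMn hlocal y
  rw [sampleExp_sub, sampleExp_sub, sampleExp_add, sampleExp_const hw.2, sampleExp_const_mul,
    sampleExp_const_mul, sampleExp_const_mul, sampleExp_estError_dotProduct_fisher hM.injective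
      hM.sum_slope (hM.affineProb_pos hq) hw.2 hn] at hmean
  have htail := mul_le_mul_of_nonneg_left hA
    (by positivity : 0 ≤ (∑ j, ∑ k, |fisher B (affineProb B c₀ q) j k|) / (2 * R ^ 2))
  have hdev : M ^ 2 / (2 * n) * sampleExp (affineProb B c₀ q)
      (fun y : Fin n → ι => ∑ j, |dev (affineProb B c₀ q) y j|)
      ≤ Fintype.card ι * M ^ 2 / 2 / √n := by
    refine (mul_le_mul_of_nonneg_left (sampleExp_sum_abs_dev_le hw (Nat.pos_of_ne_zero hn))
      (by positivity)).trans_eq ?_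
    have hsq : √(n : ℝ) ^ 2 = n := Real.sq_sqrt n.cast_nonneg
    field_simp
    rw [hsq]
    ring
  rw [logRatio, add_div]
  linarith

end LocalBound

/-! ### The limit -/

lemma eventually_lt_integral_of_eventually_lt {α ν : Type*} [MeasurableSpace α] {μ : Measure α}
    {l : Filter ν} [l.IsCountablyGenerated] {F : ν → α → ℝ} {G h : α → ℝ}
    (hF : ∀ᶠ n in l, Integrable (F n) μ) (hG : Integrable G μ) (hh : Integrable h μ)
    (hhF : ∀ᶠ n in l, ∀ᵐ a ∂μ, h a ≤ F n a)
    (hlim : ∀ᵐ a ∂μ, ∀ x < G a, ∀ᶠ n in l, x < F n a) {x : ℝ} (hx : x < ∫ a, G a ∂μ) :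
    ∀ᶠ n in l, x < ∫ a, F n a ∂μ := by
  have hmin : Tendsto (fun n => ∫ a, min (F n a) (G a) ∂μ) l (nhds (∫ a, G a ∂μ)) := by
    refine tendsto_integral_filter_of_dominated_convergence (fun a => |h a| + |G a|)
      (hF.mono fun n hn => (hn.inf hG).aestronglyMeasurable)
      (hhF.mono fun n hn => hn.mono fun a ha => ?_) (hh.abs.add hG.abs)
      (hlim.mono fun a ha => tendsto_order.2 ⟨fun y hy => (ha y hy).mono fun n hn => lt_min hn hy,
        fun y hy => Eventually.of_forall fun n => (min_le_right _ _).trans_lt hy⟩)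
    have hGn := neg_abs_le (G a)
    have hhn := neg_abs_le (h a)
    have hGa := abs_nonneg (G a)
    have hha := abs_nonneg (h a)
    exact abs_le.2 ⟨le_min (by linarith) (by linarith),
      (min_le_right _ _).trans ((le_abs_self _).trans (by linarith))⟩
  filter_upwards [hmin.eventually_const_lt hx, hF] with n hn hFn
  exact hn.trans_le (integral_mono (hFn.inf hG) hFn fun a => min_le_left _ _)

lemma integral_mul_const_of_integral_eq_one {α : Type*} [MeasurableSpace α] {μ : Measure α}
    {f : α → ℝ} (hf : ∫ a, f a ∂μ = 1) (r : ℝ) : ∫ a, f a * r ∂μ = r := by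
  rw [integral_mul_const, hf, one_mul]

/-- The almost everywhere lower limit, as `n → ∞`, of `logRatio K B c₀ f n`. -/
def logRatioLimit {ι κ : Type*} [Fintype ι] [Fintype κ] [DecidableEq ι] [DecidableEq κ]
    (B : Matrix ι κ ℝ) (c₀ : ι → ℝ) (f : (κ → ℝ) → ℝ) (q : κ → ℝ) : ℝ :=
  log (f q) + (Fintype.card κ / 2 * log (2 * π) - 1 / 2 * log (fisher B (affineProb B c₀ q)).det)
    + Fintype.card κ / 2

lemma tendsto_sqrt_natCast_atTop : Tendsto (fun n : ℕ => √(n : ℝ)) atTop atTop :=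
  tendsto_sqrt_atTop.comp tendsto_natCast_atTop_atTop

lemma eventually_forall_norm_le_add_one_div_sqrt_smul {E : Type*} [SeminormedAddCommGroup E]
    [NormedSpace ℝ E] {q : E} {p : E → Prop} (hp : ∀ᶠ x in nhds q, p x) (ρ : ℝ) :
    ∀ᶠ n : ℕ in atTop, ∀ u : E, ‖u‖ ≤ ρ → p (q + (1 / √n) • u) := by
  obtain ⟨δ, hδ, hball⟩ := Metric.eventually_nhds_iff.1 hp
  filter_upwards [(tendsto_sqrt_natCast_atTop.const_div_atTop ρ).eventually_lt_const hδ]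
    with n hn u hu
  refine hball ?_
  rw [dist_eq_norm, add_sub_cancel_left, norm_smul, Real.norm_of_nonneg (by positivity),
    one_div_mul_eq_div]
  exact (div_le_div_of_nonneg_right hu (sqrt_nonneg _)).trans_lt hn

lemma abs_mulVec_le {ι κ : Type*} [Fintype ι] [Fintype κ] (B : Matrix ι κ ℝ) (u : κ → ℝ) (j : ι) :
    |(B *ᵥ u) j| ≤ (∑ j, ∑ k, |B j k|) * ‖u‖ := calc
  |(B *ᵥ u) j| ≤ ∑ k, |B j k| * ‖u‖ := by
    refine (Finset.abs_sum_le_sum_abs _ _).trans (Finset.sum_le_sum fun k _ => ?_)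
    rw [abs_mul]
    exact mul_le_mul_of_nonneg_left (norm_le_pi_norm u k) (abs_nonneg _)
  _ = (∑ k, |B j k|) * ‖u‖ := (Finset.sum_mul _ _ _).symm
  _ ≤ (∑ j, ∑ k, |B j k|) * ‖u‖ :=
    mul_le_mul_of_nonneg_right (Finset.single_le_sum (f := fun j => ∑ k, |B j k|)
      (fun j _ => Finset.sum_nonneg fun k _ => abs_nonneg _) (Finset.mem_univ j)) (norm_nonneg u)

section Limit

variable {ι κ : Type*} [Fintype ι] [Fintype κ] {K : Set (κ → ℝ)} {B : Matrix ι κ ℝ} {c₀ : ι → ℝ}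
  {c : ℝ} {f : (κ → ℝ) → ℝ} {q : κ → ℝ}

lemma IsAffineModel.continuousOn_logRatio (hM : IsAffineModel K B c₀ c) (f : (κ → ℝ) → ℝ)
    (n : ℕ) : ContinuousOn (logRatio K B c₀ f n) K :=
  (continuousOn_finsetSum _ fun y _ => (continuous_likelihood y).continuousOn.mul
    (continuousOn_const.sub ((continuous_likelihood y).continuousOn.log
      fun _ hq => ((hM.isLikelihoodOn n).pos y hq).ne'))).add continuousOn_const

lemma setIntegral_mul_logRatio_le_condEntropy (hM : IsAffineModel K B c₀ c)
    (hf : ContinuousOn f K) (hf0 : ∀ q ∈ K, 0 ≤ f q) (hf1 : ∫ q in K, f q = 1)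
    {f' : (κ → ℝ) → ℝ} (hf' : ContinuousOn f' K) (hf'0 : ∀ q ∈ K, 0 ≤ f' q)
    (hf'1 : 0 < ∫ q in K, f' q) (n : ℕ) :
    (∫ q in K, f q * logRatio K B c₀ f' n q) - (∫ q in K, f q * log (f q))
      - log (∫ q in K, f' q)
      ≤ condEntropy K f (fun y : Fin n → ι => likelihood B c₀ y)
        + Fintype.card κ / 2 * log n := by
  have hle := le_condEntropy hM.isCompact hf hf0 hf1 (hM.isLikelihoodOn n) hf' hf'0 hf'1
  have hfn : IntegrableOn (fun q => f q * (Fintype.card κ / 2 * log n)) K :=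
    (hf.mul continuousOn_const).integrableOn_compact hM.isCompact
  have hfr : IntegrableOn (fun q => f q * logRatio K B c₀ f' n q) K :=
    (hf.mul (hM.continuousOn_logRatio f' n)).integrableOn_compact hM.isCompact
  have hsum : ∫ q in K, f q * ∑ y : Fin n → ι, likelihood B c₀ y q *
        (log (marginal K f' (fun y => likelihood B c₀ y) y) - log (likelihood B c₀ y q))
      = (∫ q in K, f q * logRatio K B c₀ f' n q) - Fintype.card κ / 2 * log n := by
    rw [← integral_mul_const_of_integral_eq_one hf1 (Fintype.card κ / 2 * log n),
      ← integral_sub hfr hfn]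
    refine integral_congr_ae (Eventually.of_forall fun q => ?_)
    simp only [logRatio, sampleExp, likelihood]
    ring
  linarith

variable [DecidableEq ι] [DecidableEq κ]

lemma eventually_lt_logRatio_of_lt (hM : IsAffineModel K B c₀ c) (hf : ContinuousOn f K)
    (hf0 : ∀ q ∈ K, 0 ≤ f q) (hq : q ∈ interior K) {R r φ A x : ℝ} (hR : 0 < R) (hr : 0 < r)
    (hφ : 0 < φ) (hφf : φ < f q)
    (hA : ∀ n ≠ 0, sampleExp (affineProb B c₀ q)
      (fun y : Fin n → ι => (∑ k, estError B (affineProb B c₀ q) y k ^ 2) ^ 2) ≤ A)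
    (hx : x < log φ + log (∫ z in Metric.closedBall (0 : κ → ℝ) r,
        exp (-(1 / 2) * (z ⬝ᵥ fisher B (affineProb B c₀ q) *ᵥ z))) + Fintype.card κ / 2
      - (∑ j, ∑ k, |fisher B (affineProb B c₀ q) j k|) / (2 * R ^ 2) * A) :
    ∀ᶠ n : ℕ in atTop, x < logRatio K B c₀ f n q := by
  have hK : K ∈ nhds q := mem_interior_iff_mem_nhds.1 hq
  set M := (∑ j, ∑ k, |B j k|) * (R + r) / c with hM_def
  have hBu (u : κ → ℝ) (hu : ‖u‖ ≤ R + r) (j : ι) : |(B *ᵥ u) j| ≤ M * c := by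
    rw [hM_def, div_mul_cancel₀ _ hM.lower_pos.ne']
    exact (abs_mulVec_le B u j).trans (mul_le_mul_of_nonneg_left hu
      (Finset.sum_nonneg fun j _ => Finset.sum_nonneg fun k _ => abs_nonneg _))
  have hnear : ∀ᶠ p in nhds q, p ∈ K ∧ φ < f p :=
    Filter.Eventually.and hK ((hf.continuousAt hK).tendsto.eventually_const_lt hφf)
  have herror := tendsto_sqrt_natCast_atTop.const_div_atTop
    (Fintype.card ι * M ^ 2 / 2 + 2 * M ^ 3)
  filter_upwards [eventually_ne_atTop 0, tendsto_sqrt_natCast_atTop.eventually_ge_atTop (2 * M),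
    eventually_forall_norm_le_add_one_div_sqrt_smul hnear (R + r),
    herror.eventually_lt_const (sub_pos.2 hx)] with n hn hMn hnear hsmall
  have hle := le_logRatio hM hf hf0 hn (interior_subset hq) hR hr hφ hMn
    (fun u hu => ⟨(hnear u hu).1, (hnear u hu).2.le, hBu u hu⟩) (hA n hn)
  linarith

/-- Balls of radius `t → ∞` for both the Gaussian integral and the truncation of the centre exhaust
the limit. -/
lemma eventually_lt_logRatio (hM : IsAffineModel K B c₀ c) (hf : ContinuousOn f K)
    (hf0 : ∀ q ∈ K, 0 ≤ f q) (hq : q ∈ interior K) (hfq : 0 < f q) {x : ℝ}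
    (hx : x < logRatioLimit B c₀ f q) : ∀ᶠ n : ℕ in atTop, x < logRatio K B c₀ f n q := by
  have hqK := interior_subset hq
  set J := fisher B (affineProb B c₀ q)
  have hJ : J.PosDef := fisher_posDef hM.injective (hM.affineProb_pos hqK)
  have hZ : 0 < ∫ z : κ → ℝ, exp (-(1 / 2) * (z ⬝ᵥ J *ᵥ z)) := by
    rw [integral_gaussian_of_posDef hJ]
    have := hJ.det_pos
    positivity
  obtain ⟨A, -, hA⟩ := exists_sampleExp_sq_sum_estError_sq_le B (hM.affineProb_mem_stdSimplex hqK)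
  have hloss : Tendsto (fun t : ℝ => (∑ j, ∑ k, |J j k|) / (2 * t ^ 2) * A) atTop (nhds 0) := by
    simpa using (Tendsto.const_div_atTop ((tendsto_pow_atTop two_ne_zero).const_mul_atTop two_pos)
      (∑ j, ∑ k, |J j k|)).mul_const A
  have hlogf : Tendsto (fun t : ℝ => log (f q) - 1 / t) atTop (nhds (log (f q))) := by
    simpa using (tendsto_id.const_div_atTop (1 : ℝ)).const_sub (log (f q))
  have hlim := ((hlogf.add ((tendsto_setIntegral_closedBall_gaussian hJ).log hZ.ne')).add_const
    (Fintype.card κ / 2 : ℝ)).sub hloss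
  rw [log_integral_gaussian_of_posDef hJ, sub_zero] at hlim
  obtain ⟨t, ht, hxt⟩ := ((eventually_gt_atTop 0).and (hlim.eventually_const_lt hx)).exists
  refine eventually_lt_logRatio_of_lt hM hf hf0 hq (φ := f q * exp (-(1 / t))) ht ht
    (by positivity) (mul_lt_of_lt_one_right hfq ?_) hA ?_
  · rw [exp_lt_one_iff, neg_lt_zero]
    positivity
  · rwa [log_mul hfq.ne' (exp_pos _).ne', log_exp, ← sub_eq_add_neg]

lemma IsAffineModel.continuousOn_log_det_fisher (hM : IsAffineModel K B c₀ c) :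
    ContinuousOn (fun q => log (fisher B (affineProb B c₀ q)).det) K :=
  ((continuous_log_det_fisher_clamp hM.injective hM.lower_pos).comp
    continuous_affineProb).continuousOn.congr fun q hq => by
      rw [Function.comp_apply, clamp_eq (hM.le_affineProb hq)]

lemma IsAffineModel.continuousOn_logRatioLimit (hM : IsAffineModel K B c₀ c)
    (hf : ContinuousOn f K) (hf0 : ∀ q ∈ K, 0 < f q) : ContinuousOn (logRatioLimit B c₀ f) K :=
  ((hf.log fun q hq => (hf0 q hq).ne').add
    (continuousOn_const.sub (continuousOn_const.mul hM.continuousOn_log_det_fisher))).add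
      continuousOn_const

lemma eventually_lt_setIntegral_mul_logRatio (hM : IsAffineModel K B c₀ c)
    (hf : ContinuousOn f K) (hf0 : ∀ q ∈ K, 0 ≤ f q) {f' : (κ → ℝ) → ℝ} (hf' : ContinuousOn f' K)
    {ε : ℝ} (hε : 0 < ε) (hfε : ∀ q ∈ K, ε ≤ f' q) (hV : 0 < volume.real K) {x : ℝ}
    (hx : x < ∫ q in K, f q * logRatioLimit B c₀ f' q) :
    ∀ᶠ n : ℕ in atTop, x < ∫ q in K, f q * logRatio K B c₀ f' n q := by
  have hKm := hM.isCompact.measurableSet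
  have hf'0 : ∀ q ∈ K, 0 < f' q := fun q hq => hε.trans_le (hfε q hq)
  obtain ⟨C, hC⟩ := exists_le_logRatio hM hf' hε hfε hV
  refine eventually_lt_integral_of_eventually_lt
    (F := fun n q => f q * logRatio K B c₀ f' n q)
    (G := fun q => f q * logRatioLimit B c₀ f' q) (h := fun q => f q * C)
    (Eventually.of_forall fun n =>
      (hf.mul (hM.continuousOn_logRatio f' n)).integrableOn_compact hM.isCompact)
    ((hf.mul (hM.continuousOn_logRatioLimit hf' hf'0)).integrableOn_compact hM.isCompact)
    ((hf.mul continuousOn_const).integrableOn_compact hM.isCompact)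
    ((eventually_ne_atTop 0).mono fun n hn => ae_restrict_of_forall_mem hKm fun q hq =>
      mul_le_mul_of_nonneg_left (hC n hn q hq) (hf0 q hq)) ?_ hx
  have hfrontier : ∀ᵐ q ∂(volume : Measure (κ → ℝ)), q ∉ frontier K :=
    measure_eq_zero_iff_ae_notMem.1 (hM.convex.addHaar_frontier volume)
  filter_upwards [ae_restrict_mem hKm, ae_restrict_of_ae hfrontier] with q hq hqf x hx
  rcases (hf0 q hq).eq_or_lt with h0 | h0
  · rw [← h0, zero_mul] at hx
    simpa only [← h0, zero_mul] using Eventually.of_forall fun _ => hx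
  have hqi : q ∈ interior K := by_contra fun h => hqf ⟨subset_closure hq, h⟩
  filter_upwards [eventually_lt_logRatio hM hf' (fun q hq => (hf'0 q hq).le) hqi (hf'0 q hq)
    ((div_lt_iff₀' h0).2 hx)] with n hn
  exact (div_lt_iff₀' h0).1 hn

/-- The entropy of the prior cancels, up to the sign of `log f' - log f`. -/
lemma le_setIntegral_mul_logRatioLimit_sub (hM : IsAffineModel K B c₀ c)
    (hf : ContinuousOn f K) (hf0 : ∀ q ∈ K, 0 ≤ f q) (hf1 : ∫ q in K, f q = 1)
    {f' : (κ → ℝ) → ℝ} (hf' : ContinuousOn f' K) (hf'0 : ∀ q ∈ K, 0 < f' q)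
    (hff' : ∀ q ∈ K, f q ≤ f' q) :
    Fintype.card κ / 2 * log (2 * π * exp 1)
        - 1 / 2 * ∫ q in K, log (fisher B (affineProb B c₀ q)).det * f q
      ≤ (∫ q in K, f q * logRatioLimit B c₀ f' q) - ∫ q in K, f q * log (f q) := by
  have hlog : log (2 * π * exp 1) = log (2 * π) + 1 := by
    rw [log_mul (by positivity) (exp_pos 1).ne', log_exp]
  have hfe : IntegrableOn (fun q => f q * (Fintype.card κ / 2 * log (2 * π * exp 1))) K :=
    (hf.mul continuousOn_const).integrableOn_compact hM.isCompact
  have hdet : IntegrableOn (fun q => 1 / 2 * (log (fisher B (affineProb B c₀ q)).det * f q)) K :=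
    (continuousOn_const.mul (hM.continuousOn_log_det_fisher.mul hf)).integrableOn_compact
      hM.isCompact
  have hlimit : IntegrableOn (fun q => f q * logRatioLimit B c₀ f' q) K :=
    (hf.mul (hM.continuousOn_logRatioLimit hf' hf'0)).integrableOn_compact hM.isCompact
  have hflog : IntegrableOn (fun q => f q * log (f q)) K :=
    (continuous_mul_log.comp_continuousOn hf).integrableOn_compact hM.isCompact
  rw [← integral_mul_const_of_integral_eq_one hf1 (Fintype.card κ / 2 * log (2 * π * exp 1)),
    ← integral_const_mul, ← integral_sub hfe hdet, ← integral_sub hlimit hflog]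
  refine setIntegral_mono_on (hfe.sub hdet) (hlimit.sub hflog) hM.isCompact.measurableSet
    fun q hq => ?_
  have hmono : f q * log (f q) ≤ f q * log (f' q) := by
    rcases (hf0 q hq).eq_or_lt with h | h
    · simp [← h]
    · exact mul_le_mul_of_nonneg_left (log_le_log h (hff' q hq)) h.le
  rw [hlog, logRatioLimit]
  linarith

/-- Adding a constant to the prior makes it bounded away from zero, at an arbitrarily small cost. -/
lemma eventually_lt_condEntropy_add_log (hM : IsAffineModel K B c₀ c) (hf : ContinuousOn f K)
    (hf0 : ∀ q ∈ K, 0 ≤ f q) (hf1 : ∫ q in K, f q = 1) {x : ℝ}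
    (hx : x < Fintype.card κ / 2 * log (2 * π * exp 1)
      - 1 / 2 * ∫ q in K, log (fisher B (affineProb B c₀ q)).det * f q) :
    ∀ᶠ n : ℕ in atTop, x < condEntropy K f (fun y : Fin n → ι => likelihood B c₀ y)
      + Fintype.card κ / 2 * log n := by
  have hfin : volume K ≠ ⊤ := hM.isCompact.measure_lt_top.ne
  have hV : 0 < volume.real K := by
    refine measureReal_nonneg.lt_of_ne' fun h => ?_
    rw [setIntegral_measure_zero _ ((measureReal_eq_zero_iff hfin).1 h)] at hf1
    exact zero_ne_one hf1
  set z := Fintype.card κ / 2 * log (2 * π * exp 1)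
      - 1 / 2 * ∫ q in K, log (fisher B (affineProb B c₀ q)).det * f q with hz
  set ε := (z - x) / 2 / volume.real K with hε_def
  have hε : 0 < ε := div_pos (half_pos (sub_pos.2 hx)) hV
  have hf' : ContinuousOn (fun q => f q + ε) K := hf.add continuousOn_const
  have hfε : ∀ q ∈ K, ε ≤ f q + ε := fun q hq => le_add_of_nonneg_left (hf0 q hq)
  have hf'1 : ∫ q in K, (f q + ε) = 1 + (z - x) / 2 := by
    rw [integral_add (hf.integrableOn_compact hM.isCompact) (integrableOn_const hfin), hf1,
      setIntegral_const, smul_eq_mul, hε_def, mul_div_cancel₀ _ hV.ne']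
  have hcost : log (∫ q in K, (f q + ε)) ≤ (z - x) / 2 := by
    rw [hf'1]
    exact (log_le_sub_one_of_pos (by linarith)).trans_eq (by ring)
  have hentropy := le_setIntegral_mul_logRatioLimit_sub hM hf hf0 hf1 hf'
    (fun q hq => hε.trans_le (hfε q hq)) fun q _ => le_add_of_nonneg_right hε.le
  rw [← hz] at hentropy
  filter_upwards [eventually_lt_setIntegral_mul_logRatio hM hf hf0 hf' hε hfε hV
    (sub_lt_self _ (half_pos (sub_pos.2 hx)))] with n hn
  have hle := setIntegral_mul_logRatio_le_condEntropy hM hf hf0 hf1 hf'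
    (fun q hq => hε.le.trans (hfε q hq)) (by rw [hf'1]; linarith) n
  linarith

lemma eventually_condEntropy_add_log_lt (hM : IsAffineModel K B c₀ c) (hf : ContinuousOn f K)
    (hf0 : ∀ q ∈ K, 0 ≤ f q) (hf1 : ∫ q in K, f q = 1) {x : ℝ}
    (hx : Fintype.card κ / 2 * log (2 * π * exp 1)
      - 1 / 2 * ∫ q in K, log (fisher B (affineProb B c₀ q)).det * f q < x) :
    ∀ᶠ n : ℕ in atTop, condEntropy K f (fun y : Fin n → ι => likelihood B c₀ y)
      + Fintype.card κ / 2 * log n < x := by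
  have hlog : log (2 * π * exp 1) = log (2 * π) + 1 := by
    rw [log_mul (by positivity) (exp_pos 1).ne', log_exp]
  have hdet : IntegrableOn (fun q => -(1 / 2) * (log (fisher B (affineProb B c₀ q)).det * f q)) K :=
    (continuousOn_const.mul (hM.continuousOn_log_det_fisher.mul hf)).integrableOn_compact
      hM.isCompact
  have hfm : IntegrableOn (fun q => f q * (Fintype.card κ / 2 : ℝ)) K :=
    (hf.mul continuousOn_const).integrableOn_compact hM.isCompact
  have hint : ∫ q in K, f q *
        (-(1 / 2) * log (fisher B (affineProb B c₀ q)).det + Fintype.card κ / 2)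
      = -(1 / 2) * (∫ q in K, log (fisher B (affineProb B c₀ q)).det * f q)
        + Fintype.card κ / 2 := by
    have hmass := integral_mul_const_of_integral_eq_one hf1 (Fintype.card κ / 2)
    rw [← integral_const_mul, ← hmass, ← integral_add hdet hfm, hmass]
    refine integral_congr_ae (Eventually.of_forall fun q => ?_)
    ring
  have hlim := (tendsto_setIntegral_sampleExp_plugin hM hf).add_const
    (Fintype.card κ / 2 * log (2 * π))
  rw [hint] at hlim
  rw [hlog] at hx
  filter_upwards [hlim.eventually_lt_const (u := x) (by linarith), eventually_ne_atTop 0]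
    with n hn hn0
  exact (condEntropy_add_log_le hM hf hf0 hf1 hn0).trans_lt hn

theorem tendsto_condEntropy_add_log (hM : IsAffineModel K B c₀ c) (hf : ContinuousOn f K)
    (hf0 : ∀ q ∈ K, 0 ≤ f q) (hf1 : ∫ q in K, f q = 1) :
    Tendsto (fun n : ℕ => condEntropy K f (fun y : Fin n → ι => likelihood B c₀ y)
        + Fintype.card κ / 2 * log n) atTop
      (nhds (Fintype.card κ / 2 * log (2 * π * exp 1)
        - 1 / 2 * ∫ q in K, log (fisher B (affineProb B c₀ q)).det * f q)) :=
  tendsto_order.2 ⟨fun _ => eventually_lt_condEntropy_add_log hM hf hf0 hf1,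
    fun _ => eventually_condEntropy_add_log_lt hM hf hf0 hf1⟩

end Limit

/-! ### Privacy protocols as affine families -/

/-- The matrix of `q ↦ Q p(q)`: its columns are the differences between the first `m` columns of
`Q` and the last one. -/
def slopeMatrix {ι : Type*} {m : ℕ} (Q : Matrix ι (Fin (m + 1)) ℝ) : Matrix ι (Fin m) ℝ :=
  Matrix.of fun j k => Q j k.castSucc - Q j (Fin.last m)

/-- The last column of `Q`, which is the constant term of `q ↦ Q p(q)`. -/
def lastColumn {ι : Type*} {m : ℕ} (Q : Matrix ι (Fin (m + 1)) ℝ) : ι → ℝ :=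
  fun j => Q j (Fin.last m)

/-- The matrix, of determinant one, whose columns are the vectors `e_k - e_last` for `k < m` and
`p(q)`, with the coordinates of `Fin (m + 1)` split as `Fin m ⊕ Fin 1`. -/
def cornerBasis {m : ℕ} (q : Fin m → ℝ) : Matrix (Fin m ⊕ Fin 1) (Fin m ⊕ Fin 1) ℝ :=
  fromBlocks 1 (replicateCol (Fin 1) q) (Matrix.of fun _ _ => -1)
    (Matrix.of fun _ _ => 1 - ∑ i, q i)

section Corner

variable {ι : Type*} {m : ℕ} {q : Fin m → ℝ}

lemma isCompact_stdCorner (m : ℕ) : IsCompact (stdCorner m) := by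
  refine isCompact_Icc.of_isClosed_subset (s := Set.Icc 0 1) ?_ fun q hq =>
    ⟨hq.1, fun i => (Finset.single_le_sum (fun k _ => hq.1 k) (Finset.mem_univ i)).trans hq.2⟩
  have h0 : IsClosed {q : Fin m → ℝ | ∀ i, 0 ≤ q i} :=
    isClosed_Ici (a := (0 : Fin m → ℝ))
  exact h0.inter
    (isClosed_le (continuous_finsetSum _ fun i _ => continuous_apply i) continuous_const)

lemma convex_stdCorner (m : ℕ) : Convex ℝ (stdCorner m) := by
  have hsum : IsLinearMap ℝ fun q : Fin m → ℝ => ∑ i, q i :=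
    ⟨fun p q => by simp [Finset.sum_add_distrib], fun r q => by simp [Finset.mul_sum]⟩
  exact (convex_Ici (0 : Fin m → ℝ)).inter (convex_halfSpace_le hsum 1)

lemma isCompact_simplex (a : ℕ) : IsCompact (simplex a) := isCompact_stdSimplex ℝ (Fin a)

lemma emb_castSucc (q : Fin m → ℝ) (k : Fin m) : emb (m + 1) q k.castSucc = q k := by simp [emb]

lemma emb_last (q : Fin m → ℝ) : emb (m + 1) q (Fin.last m) = 1 - ∑ i, q i := by simp [emb]

lemma emb_mem_simplex (hq : q ∈ stdCorner m) : emb (m + 1) q ∈ simplex (m + 1) := by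
  refine ⟨Fin.forall_fin_succ'.2 ⟨fun k => ?_, ?_⟩, ?_⟩
  · rw [emb_castSucc]
    exact hq.1 k
  · rw [emb_last]
    exact sub_nonneg.2 hq.2
  · simp only [Fin.sum_univ_castSucc, emb_castSucc, emb_last, add_sub_cancel]

lemma mulVec_emb (Q : Matrix ι (Fin (m + 1)) ℝ) (q : Fin m → ℝ) :
    Q *ᵥ emb (m + 1) q = affineProb (slopeMatrix Q) (lastColumn Q) q := by
  ext j
  simp only [affineProb, slopeMatrix, lastColumn, mulVec, dotProduct, of_apply, Pi.add_apply,
    Fin.sum_univ_castSucc, emb_castSucc, emb_last, sub_mul, Finset.sum_sub_distrib,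
    ← Finset.mul_sum]
  ring

lemma det_cornerBasis (q : Fin m → ℝ) : (cornerBasis q).det = 1 := by
  rw [cornerBasis, det_fromBlocks_one₁₁, det_fin_one]
  simp [Matrix.mul_apply]

lemma submatrix_mul_cornerBasis (Q : Matrix ι (Fin (m + 1)) ℝ) (q : Fin m → ℝ) :
    Q.submatrix id finSumFinEquiv * cornerBasis q
      = fromCols (slopeMatrix Q) (replicateCol (Fin 1) (Q *ᵥ emb (m + 1) q)) := by
  have hinl (k : Fin m) : finSumFinEquiv (Sum.inl k : Fin m ⊕ Fin 1) = k.castSucc := rfl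
  have hinr (k : Fin 1) : finSumFinEquiv (Sum.inr k : Fin m ⊕ Fin 1) = Fin.last m := by
    rw [Subsingleton.elim k 0]; rfl
  ext j (k | k)
  · simp [Matrix.mul_apply, cornerBasis, slopeMatrix, hinl, hinr, Matrix.one_apply, sub_eq_add_neg]
  · simp [Matrix.mul_apply, cornerBasis, mulVec, dotProduct, hinl, hinr, Fin.sum_univ_castSucc,
      emb_castSucc, emb_last]

end Corner

section Determinant

variable {ι κ τ : Type*} [Fintype ι] [DecidableEq ι] {B : Matrix ι κ ℝ} {w : ι → ℝ} {m : ℕ}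

lemma fisher_mul [Fintype κ] (B : Matrix ι κ ℝ) (T : Matrix κ τ ℝ) (w : ι → ℝ) :
    fisher (B * T) w = Tᵀ * fisher B w * T := by
  simp only [fisher, transpose_mul, Matrix.mul_assoc]

lemma det_fisher_fromCols_replicateCol [Fintype κ] [DecidableEq κ] (hB : ∀ k, ∑ j, B j k = 0)
    (hw : ∀ j, w j ≠ 0) (hw1 : ∑ j, w j = 1) :
    (fisher (fromCols B (replicateCol (Fin 1) w)) w).det = (fisher B w).det := by
  have hdiag : diagonal (fun j => (w j)⁻¹) * replicateCol (Fin 1) w = replicateCol (Fin 1) 1 := by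
    rw [← replicateCol_mulVec, diagonal_inv_mulVec_self hw]
  have hcross : Bᵀ * diagonal (fun j => (w j)⁻¹) * replicateCol (Fin 1) w = 0 := by
    rw [Matrix.mul_assoc, hdiag, ← replicateCol_mulVec, transpose_mulVec_one hB,
      replicateCol_zero]
  have hcorner : (replicateCol (Fin 1) w)ᵀ * diagonal (fun j => (w j)⁻¹) * replicateCol (Fin 1) w
      = 1 := by
    rw [Matrix.mul_assoc, hdiag, transpose_replicateCol, replicateRow_mul_replicateCol]
    ext k l
    simp [dotProduct, hw1, Subsingleton.elim k l, Matrix.one_apply]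
  rw [fisher, transpose_fromCols, fromRows_mul, fromRows_mul_fromCols, hcross, hcorner,
    det_fromBlocks_zero₁₂, det_one, mul_one, fisher]

/-- Since `D_p p = (1, …, 1)`, the matrix `D_p` becomes block diagonal in the basis
`cornerBasis q`, with blocks the Fisher information and `1`. -/
lemma det_Dmat_emb {b : ℕ} {Q : Matrix (Fin b) (Fin (m + 1)) ℝ} (hcol : ∀ x, ∑ y, Q y x = 1)
    {q : Fin m → ℝ} (hq : ∀ y, (Q *ᵥ emb (m + 1) q) y ≠ 0) :
    (Dmat Q (emb (m + 1) q)).det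
      = (fisher (slopeMatrix Q) (affineProb (slopeMatrix Q) (lastColumn Q) q)).det := by
  have hsum : ∑ y, (Q *ᵥ emb (m + 1) q) y = 1 := by
    simp only [mulVec, dotProduct]
    rw [Finset.sum_comm]
    simp only [← Finset.sum_mul, hcol, one_mul, Fin.sum_univ_castSucc, emb_castSucc, emb_last,
      add_sub_cancel]
  have hslope (k : Fin m) : ∑ y, slopeMatrix Q y k = 0 := by simp [slopeMatrix, hcol]
  rw [← mulVec_emb, ← det_fisher_fromCols_replicateCol hslope hq hsum,
    ← submatrix_mul_cornerBasis, fisher_mul, det_mul, det_mul, det_transpose, det_cornerBasis,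
    one_mul, mul_one, ← det_submatrix_equiv_self finSumFinEquiv]
  rfl

end Determinant

namespace IsContDensity

variable {m : ℕ} {μ : Measure (Fin (m + 1) → ℝ)} {f : (Fin m → ℝ) → ℝ}

lemma ae_mem_simplex [IsProbabilityMeasure μ] (hf : IsContDensity μ f) :
    ∀ᵐ p ∂μ, p ∈ simplex (m + 1) := by
  have hS := (isCompact_simplex (m + 1)).measurableSet
  have h := hf.2.2.2 ((simplex (m + 1)).indicator 1) (measurable_one.indicator hS)
    ⟨1, fun p => by by_cases hp : p ∈ simplex (m + 1) <;> simp [hp]⟩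
  have hone : ∫ q in stdCorner m, (simplex (m + 1)).indicator 1 (emb (m + 1) q) * f q = 1 :=
    (setIntegral_congr_fun (isCompact_stdCorner m).measurableSet fun q hq => by
      simp [emb_mem_simplex hq]).trans hf.2.2.1
  rw [integral_indicator_one hS] at h
  exact (mem_ae_iff_prob_eq_one hS).2 ((ENNReal.toReal_eq_one_iff _).1 (h.trans hone))

lemma integral_eq [IsProbabilityMeasure μ] (hf : IsContDensity μ f) {g : (Fin (m + 1) → ℝ) → ℝ}
    (hg : ContinuousOn g (simplex (m + 1))) :
    ∫ p, g p ∂μ = ∫ q in stdCorner m, g (emb (m + 1) q) * f q := by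
  classical
  have hS := isCompact_simplex (m + 1)
  obtain ⟨C, hC⟩ := hS.exists_bound_of_continuousOn hg
  have hmeas : Measurable ((simplex (m + 1)).indicator g) := by
    rw [← Set.piecewise_eq_indicator]
    exact hg.measurable_piecewise continuousOn_const hS.measurableSet
  have hbdd (p : Fin (m + 1) → ℝ) : |(simplex (m + 1)).indicator g p| ≤ |C| := by
    by_cases hp : p ∈ simplex (m + 1)
    · simpa [hp] using (hC p hp).trans (le_abs_self C)
    · simp [hp]
  calc ∫ p, g p ∂μ = ∫ p, (simplex (m + 1)).indicator g p ∂μ :=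
        integral_congr_ae <| hf.ae_mem_simplex.mono fun p hp => by simp [hp]
    _ = ∫ q in stdCorner m, (simplex (m + 1)).indicator g (emb (m + 1) q) * f q :=
        hf.2.2.2 _ hmeas ⟨|C|, hbdd⟩
    _ = ∫ q in stdCorner m, g (emb (m + 1) q) * f q :=
        setIntegral_congr_fun (isCompact_stdCorner m).measurableSet fun q hq => by
          simp [emb_mem_simplex hq]

end IsContDensity

section Protocol

variable {ι : Type*} {m b : ℕ} {c : ℝ}

lemma mulVec_injective_of_rank_eq_card {κ : Type*} [Fintype κ] {Q : Matrix ι κ ℝ}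
    (h : Q.rank = Fintype.card κ) : Function.Injective Q.mulVec := by
  rw [mulVec_injective_iff, linearIndependent_iff_card_eq_finrank_span, Set.finrank,
    ← rank_eq_finrank_span_cols, h]

lemma le_mulVec_of_mem_simplex {a : ℕ} {Q : Matrix ι (Fin a) ℝ} {p : Fin a → ℝ}
    (hQ : ∀ y x, c ≤ Q y x) (hp : p ∈ simplex a) (y : ι) : c ≤ (Q *ᵥ p) y :=
  calc c = ∑ x, c * p x := by rw [← Finset.mul_sum, hp.2, mul_one]
    _ ≤ (Q *ᵥ p) y :=
      Finset.sum_le_sum fun x _ => mul_le_mul_of_nonneg_right (hQ y x) (hp.1 x)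

lemma slopeMatrix_mulVec_injective {Q : Matrix ι (Fin (m + 1)) ℝ}
    (hQ : Function.Injective Q.mulVec) : Function.Injective (slopeMatrix Q).mulVec := by
  intro u v huv
  have hemb : emb (m + 1) u = emb (m + 1) v :=
    hQ (by simpa only [mulVec_emb, affineProb] using congrArg (lastColumn Q + ·) huv)
  ext k
  rw [← emb_castSucc u, hemb, emb_castSucc]

lemma isAffineModel_slopeMatrix [Fintype ι] {Q : Matrix ι (Fin (m + 1)) ℝ} (hc : 0 < c)
    (hQ : ∀ y x, c ≤ Q y x) (hcol : ∀ x, ∑ y, Q y x = 1) (hrank : Q.rank = m + 1) :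
    IsAffineModel (stdCorner m) (slopeMatrix Q) (lastColumn Q) c where
  isCompact := isCompact_stdCorner m
  convex := convex_stdCorner m
  injective := slopeMatrix_mulVec_injective
    (mulVec_injective_of_rank_eq_card (hrank.trans (Fintype.card_fin _).symm))
  sum_slope k := by simp [slopeMatrix, hcol]
  sum_base := hcol _
  lower_pos := hc
  le_affineProb hq j := by
    rw [← mulVec_emb]
    exact le_mulVec_of_mem_simplex hQ (emb_mem_simplex hq) j

lemma exists_pos_forall_le_of_forall_pos {α : Type*} [Finite α] {g : α → ℝ} (hg : ∀ z, 0 < g z) :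
    ∃ c > 0, ∀ z, c ≤ g z := by
  cases isEmpty_or_nonempty α
  · exact ⟨1, one_pos, isEmptyElim⟩
  · obtain ⟨z, hz⟩ := Finite.exists_min g
    exact ⟨g z, hg z, hz⟩

lemma continuousOn_log_det_Dmat {a : ℕ} {Q : Matrix (Fin b) (Fin a) ℝ}
    (hinj : Function.Injective Q.mulVec) (hc : 0 < c) (hQ : ∀ y x, c ≤ Q y x) :
    ContinuousOn (fun p => log (Dmat Q p).det) (simplex a) :=
  ((continuous_log_det_fisher_clamp hinj hc).comp
    (continuous_const.matrix_mulVec continuous_id : Continuous (Q *ᵥ ·))).continuousOn.congr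
      fun p hp => by
        rw [Function.comp_apply, clamp_eq (le_mulVec_of_mem_simplex hQ hp)]
        rfl

lemma integral_log_det_Dmat {Q : Matrix (Fin b) (Fin (m + 1)) ℝ} {μ : Measure (Fin (m + 1) → ℝ)}
    [IsProbabilityMeasure μ] {f : (Fin m → ℝ) → ℝ} (hc : 0 < c) (hQ : ∀ y x, c ≤ Q y x)
    (hcol : ∀ x, ∑ y, Q y x = 1) (hrank : Q.rank = m + 1) (hf : IsContDensity μ f) :
    ∫ p, log (Dmat Q p).det ∂μ = ∫ q in stdCorner m,
      log (fisher (slopeMatrix Q) (affineProb (slopeMatrix Q) (lastColumn Q) q)).det * f q := by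
  have hinj : Function.Injective Q.mulVec :=
    mulVec_injective_of_rank_eq_card (hrank.trans (Fintype.card_fin _).symm)
  rw [hf.integral_eq (continuousOn_log_det_Dmat hinj hc hQ)]
  refine setIntegral_congr_fun (isCompact_stdCorner m).measurableSet fun q hq => ?_
  have hpos (y : Fin b) : (Q *ᵥ emb (m + 1) q) y ≠ 0 :=
    (hc.trans_le (le_mulVec_of_mem_simplex hQ (emb_mem_simplex hq) y)).ne'
  simp only [det_Dmat_emb hcol hpos]

lemma hCond_eq_condEntropy (Q : Matrix (Fin b) (Fin (m + 1)) ℝ) (f : (Fin m → ℝ) → ℝ) (n : ℕ) :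
    hCond Q f n = condEntropy (stdCorner m) f
      fun y : Fin n → Fin b => likelihood (slopeMatrix Q) (lastColumn Q) y := by
  simp only [hCond, gpost, Cw, lik, condEntropy, posterior, marginal, likelihood, ← mulVec_emb]
  rfl

end Protocol

/-- asymptotics of the conditional differential entropy
`h_n(P|Y⃗)`. -/
theorem hCond_asymptotics {a b : ℕ} (ha : 2 ≤ a) (hb : 2 ≤ b)
    (Q : Matrix (Fin b) (Fin a) ℝ)
    (hQpos : ∀ y x, 0 < Q y x) (hQcol : ∀ x, ∑ y, Q y x = 1)
    (μ : Measure (Fin a → ℝ)) [IsProbabilityMeasure μ]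
    (hrank : Q.rank = a)
    (f : (Fin (a - 1) → ℝ) → ℝ) (hf : IsContDensity μ f)
    (hint : Integrable (fun p => Real.log (Dmat Q p).det) μ) :
    Filter.Tendsto (fun n : ℕ => hCond Q f n + (((a : ℝ) - 1) / 2) * Real.log n)
      Filter.atTop (nhds (gammaMu Q μ)) := by
  obtain ⟨m, rfl⟩ : ∃ m, a = m + 1 := ⟨a - 1, by omega⟩
  change (Fin m → ℝ) → ℝ at f
  obtain ⟨c, hc, hle⟩ : ∃ c > 0, ∀ z : Fin b × Fin (m + 1), c ≤ Q z.1 z.2 :=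
    exists_pos_forall_le_of_forall_pos fun z => hQpos z.1 z.2
  have hQ (y : Fin b) (x : Fin (m + 1)) : c ≤ Q y x := hle (y, x)
  have hcast : ((m + 1 : ℕ) : ℝ) - 1 = m := by push_cast; ring
  rw [gammaMu, integral_log_det_Dmat hc hQ hQcol hrank hf, hcast]
  simpa only [hCond_eq_condEntropy, Fintype.card_fin] using
    tendsto_condEntropy_add_log (isAffineModel_slopeMatrix hc hQ hQcol hrank) hf.1
      (fun q _ => hf.2.1 q) hf.2.2.1

end
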